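/- arXiv:2212.11371 — 2 statements merged into one kernel-verified Lean document; each statement's English description precedes it below -/
import Mathlib

section
/- The intersection of the Markov spectrum M with the open interval ((15−√30)/3, (332001+3760√30)/110409) consists of exactly one point, namely √9797/31, which is therefore an isolated point of M. Moreover, both endpoints (15−√30)/3 and (332001+3760√30)/110409 belong to M. -/
open Filter Set MeasureTheory
open scoped ENNReal

/-- Finite continued fraction `[a 0; a 1, ..., a n]`. -/
noncomputable def cfConv : (ℕ → ℝ) → ℕ → ℝ
  | a, 0 => a 0
  | a, n + 1 => a 0 + 1 / cfConv (fun i => a (i + 1)) n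

/-- Value of the infinite continued fraction `[a 0; a 1, a 2, ...]`,
as the limit of its convergents. -/
noncomputable def cfVal (a : ℕ → ℝ) : ℝ := limUnder atTop (cfConv a)

/-- `λ_k(α) = [α_k; α_{k+1}, ...] + [0; α_{k-1}, α_{k-2}, ...]`. -/
noncomputable def lambdaVal (α : ℤ → ℕ) (k : ℤ) : ℝ :=
  cfVal (fun n => (α (k + n) : ℝ)) +
  cfVal (fun n => if n = 0 then 0 else (α (k - n) : ℝ))

/-- The Markov value `m(α) = sup_{k ∈ ℤ} λ_k(α)`. -/
noncomputable def markovValue (α : ℤ → ℕ) : ℝ := ⨆ k : ℤ, lambdaVal α k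

/-- The Markov spectrum. -/
def markovSpectrum : Set ℝ :=
  { x | ∃ α : ℤ → ℕ, (∀ n, 0 < α n) ∧ BddAbove (range (lambdaVal α)) ∧
      markovValue α = x }

/-- The dimension function `d(t) = dim_H (M ∩ (-∞, t))`. -/
noncomputable def dimFun (t : ℝ) : ℝ≥0∞ := dimH (markovSpectrum ∩ Iio t)

/-! ### Convergence of continued fractions -/

theorem cfConv_succ (a : ℕ → ℝ) (n : ℕ) :
    cfConv a (n + 1) = a 0 + 1 / cfConv (fun i => a (i + 1)) n := rfl

theorem one_le_cfConv {a : ℕ → ℝ} (ha : ∀ n, 1 ≤ a n) (n : ℕ) : 1 ≤ cfConv a n := by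
  induction n generalizing a with
  | zero => exact ha 0
  | succ n ih =>
    have h := ih fun i => ha (i + 1)
    rw [cfConv_succ]
    have : 0 ≤ 1 / cfConv (fun i => a (i + 1)) n := by positivity
    linarith [ha 0]

theorem abs_cfConv_sub_le_one {a : ℕ → ℝ} (ha : ∀ n, 1 ≤ a n) (n m : ℕ) :
    |cfConv a n - cfConv a m| ≤ 1 := by
  have key : ∀ n, a 0 ≤ cfConv a n ∧ cfConv a n ≤ a 0 + 1 := by
    rintro (_ | n)
    · exact ⟨le_rfl, by simp [cfConv]⟩
    · have h := one_le_cfConv (a := fun i => a (i + 1)) (fun i => ha (i + 1)) n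
      rw [cfConv_succ]
      have h0 : 0 ≤ 1 / cfConv (fun i => a (i + 1)) n := by positivity
      have h1 : 1 / cfConv (fun i => a (i + 1)) n ≤ 1 := by
        rw [div_le_one (by linarith)]; exact h
      constructor <;> linarith
  rw [abs_le]
  constructor <;> linarith [(key n).1, (key n).2, (key m).1, (key m).2]

theorem abs_two_step_sub_le {b x y : ℝ} (hb : 1 ≤ b) (hx : 1 ≤ x) (hy : 1 ≤ y) :
    |1 / (b + 1 / x) - 1 / (b + 1 / y)| ≤ 1 / 4 * |x - y| := by
  have hx0 : 0 < x := by linarith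
  have hy0 : 0 < y := by linarith
  have hX : 2 ≤ b * x + 1 := by nlinarith
  have hY : 2 ≤ b * y + 1 := by nlinarith
  have e : 1 / (b + 1 / x) - 1 / (b + 1 / y) = 1 / ((b * x + 1) * (b * y + 1)) * (x - y) := by
    have h : b + 1 / x = (b * x + 1) / x := by field_simp
    have h' : b + 1 / y = (b * y + 1) / y := by field_simp
    rw [h, h', one_div_div, one_div_div]
    field_simp
    ring
  rw [e, abs_mul, abs_of_pos (by positivity)]
  gcongr
  nlinarith

theorem abs_cfConv_sub_le {a : ℕ → ℝ} (ha : ∀ n, 1 ≤ a n) (j n m : ℕ) :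
    |cfConv a (n + 2 * j) - cfConv a (m + 2 * j)| ≤ (1 / 4) ^ j := by
  induction j generalizing a with
  | zero => simpa using abs_cfConv_sub_le_one ha n m
  | succ j ih =>
    have h := ih fun i => ha (i + 2)
    have e : ∀ n, cfConv a (n + 2 * (j + 1)) =
        a 0 + 1 / (a 1 + 1 / cfConv (fun i => a (i + 2)) (n + 2 * j)) := fun n => rfl
    rw [e, e, add_sub_add_left_eq_sub, pow_succ']
    refine (abs_two_step_sub_le (ha 1) (one_le_cfConv (fun i => ha (i + 2)) _)
      (one_le_cfConv (fun i => ha (i + 2)) _)).trans ?_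
    gcongr

theorem tendsto_cfConv {a : ℕ → ℝ} (ha : ∀ n, 1 ≤ a n) :
    Tendsto (cfConv a) atTop (nhds (cfVal a)) := by
  have hc : CauchySeq (cfConv a) := by
    refine Metric.cauchySeq_iff'.2 fun ε hε => ?_
    obtain ⟨j, hj⟩ := exists_pow_lt_of_lt_one hε (by norm_num : (1 / 4 : ℝ) < 1)
    refine ⟨2 * j, fun n hn => ?_⟩
    have h := abs_cfConv_sub_le ha j (n - 2 * j) 0
    rw [Nat.sub_add_cancel hn, zero_add] at h
    exact h.trans_lt hj
  obtain ⟨x, hx⟩ := cauchySeq_tendsto_of_complete hc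
  exact tendsto_nhds_limUnder ⟨x, hx⟩

theorem one_le_cfVal {a : ℕ → ℝ} (ha : ∀ n, 1 ≤ a n) : 1 ≤ cfVal a :=
  ge_of_tendsto' (tendsto_cfConv ha) (one_le_cfConv ha)

theorem cfVal_eq {a : ℕ → ℝ} (ha : ∀ n, 1 ≤ a (n + 1)) :
    cfVal a = a 0 + 1 / cfVal (fun i => a (i + 1)) := by
  have h1 := one_le_cfVal ha
  have h : Tendsto (fun n => cfConv a (n + 1)) atTop
      (nhds (a 0 + 1 / cfVal (fun i => a (i + 1)))) :=
    tendsto_const_nhds.add (tendsto_const_nhds.div (tendsto_cfConv ha) (by linarith))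
  exact ((tendsto_add_atTop_iff_nat 1).1 h).limUnder_eq

/-! ### Tails of bi-infinite sequences -/

/-- The tail `[0; α_k, α_{k+1}, ...]`. -/
noncomputable def cfTail (α : ℤ → ℕ) (k : ℤ) : ℝ := 1 / cfVal (fun n => (α (k + n) : ℝ))

/-- The sequence read backwards. -/
def seqRev (α : ℤ → ℕ) : ℤ → ℕ := fun n => α (-n)

theorem cfTail_congr {α β : ℤ → ℕ} {j k : ℤ} (h : ∀ n : ℕ, α (j + n) = β (k + n)) :
    cfTail α j = cfTail β k := by
  simp only [cfTail, h]

theorem cfVal_eq_add_cfTail {α : ℤ → ℕ} (hα : ∀ n, 0 < α n) (k : ℤ) :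
    cfVal (fun n => (α (k + n) : ℝ)) = α k + cfTail α (k + 1) := by
  rw [cfVal_eq fun n => by exact_mod_cast hα _, cfTail]
  simp only [Nat.cast_zero, add_zero, Nat.cast_add, Nat.cast_one]
  congr 4
  ext n
  congr 2
  ring

theorem cfTail_eq {α : ℤ → ℕ} (hα : ∀ n, 0 < α n) (k : ℤ) :
    cfTail α k = 1 / (α k + cfTail α (k + 1)) := by
  rw [← cfVal_eq_add_cfTail hα, cfTail]

theorem cfTail_pos {α : ℤ → ℕ} (hα : ∀ n, 0 < α n) (k : ℤ) : 0 < cfTail α k := by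
  have h := one_le_cfVal (a := fun n => (α (k + n) : ℝ)) fun n => by exact_mod_cast hα _
  rw [cfTail]
  positivity

theorem lambdaVal_eq {α : ℤ → ℕ} (hα : ∀ n, 0 < α n) (k : ℤ) :
    lambdaVal α k = α k + cfTail α (k + 1) + cfTail (seqRev α) (1 - k) := by
  rw [lambdaVal, cfVal_eq_add_cfTail hα, cfVal_eq, cfTail]
  · simp only [if_true, Nat.add_eq_zero_iff, one_ne_zero, and_false, if_false, zero_add]
    congr 4
    ext n
    congr 2
    push_cast
    ring
  · intro n
    simp only [Nat.add_eq_zero_iff, one_ne_zero, and_false, if_false]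
    exact_mod_cast hα _

theorem lambdaVal_seqRev {α : ℤ → ℕ} (hα : ∀ n, 0 < α n) (k : ℤ) :
    lambdaVal (seqRev α) k = lambdaVal α (-k) := by
  rw [lambdaVal_eq hα, lambdaVal_eq (α := seqRev α) fun n => hα (-n)]
  have h1 : cfTail (seqRev (seqRev α)) (1 - k) = cfTail α (-k + 1) :=
    cfTail_congr fun n => by simp only [seqRev]; congr 1; ring
  have h2 : (1 : ℤ) - -k = k + 1 := by ring
  rw [h1, h2, seqRev]
  ring

theorem lambdaVal_shift (α : ℤ → ℕ) (j k : ℤ) :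
    lambdaVal (fun n => α (j + n)) k = lambdaVal α (j + k) := by
  simp only [lambdaVal, add_assoc, add_sub_assoc]

/-! ### Bounds read off from finite words -/

/-- The sequence takes only the values `1` and `2`. -/
def OneTwo (α : ℤ → ℕ) : Prop := ∀ n, α n = 1 ∨ α n = 2

theorem OneTwo.pos {α : ℤ → ℕ} (h : OneTwo α) (n : ℤ) : 0 < α n := by
  rcases h n with h | h <;> omega

theorem OneTwo.seqRev {α : ℤ → ℕ} (h : OneTwo α) : OneTwo (seqRev α) := fun n => h (-n)

/-- The word `w` occurs in `α` from position `k` on. -/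
def Reads (α : ℤ → ℕ) : ℤ → List ℕ → Prop
  | _, [] => True
  | k, a :: w => α k = a ∧ Reads α (k + 1) w

/-- Lower and upper bounds for `[0; w, t]` with `t` between `p` and `q`. -/
noncomputable def cfBounds (p q : ℝ) : List ℕ → ℝ × ℝ
  | [] => (p, q)
  | a :: w => (1 / (a + (cfBounds p q w).2), 1 / (a + (cfBounds p q w).1))

theorem cfTail_mem_cfBounds {α : ℤ → ℕ} (hα : ∀ n, 0 < α n) {p q : ℝ} (hp : 0 < p)
    (h : ∀ k, cfTail α k ∈ Icc p q) (w : List ℕ) (k : ℤ) (hw : Reads α k w) :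
    cfTail α k ∈ Icc (cfBounds p q w).1 (cfBounds p q w).2 ∧ 0 < (cfBounds p q w).1 := by
  induction w generalizing k with
  | nil => exact ⟨h k, hp⟩
  | cons a w ih =>
    obtain ⟨⟨h1, h2⟩, h0⟩ := ih (k + 1) hw.2
    have ht := cfTail_pos hα (k + 1)
    rw [cfTail_eq hα, hw.1]
    simp only [cfBounds]
    have ha : (0 : ℝ) ≤ a := Nat.cast_nonneg a
    refine ⟨⟨?_, ?_⟩, ?_⟩
    · gcongr
    · gcongr
    · have : 0 < (a : ℝ) + (cfBounds p q w).2 := by linarith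
      positivity

theorem reads_reverse_append {α : ℤ → ℕ} (w u : List ℕ) (k : ℤ)
    (h : Reads α k (w.reverse ++ u)) :
    Reads (seqRev α) (1 - (k + w.length)) w ∧ Reads α (k + w.length) u := by
  induction w generalizing u with
  | nil => simpa [Reads] using h
  | cons a w ih =>
    rw [List.reverse_cons, List.append_assoc] at h
    obtain ⟨h1, h2, h3⟩ := ih ([a] ++ u) h
    rw [List.length_cons]
    push_cast
    refine ⟨⟨?_, ?_⟩, ?_⟩
    · rw [← h2, seqRev]
      congr 1
      ring
    · rw [show 1 - (k + ((w.length : ℤ) + 1)) + 1 = 1 - (k + w.length) by ring]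
      exact h1
    · rw [← add_assoc]
      exact h3

theorem OneTwo.cfTail_mem {α : ℤ → ℕ} (h : OneTwo α) (k : ℤ) :
    cfTail α k ∈ Icc (4 / 11 : ℝ) (11 / 15) := by
  have key : ∀ {p q : ℝ}, 0 ≤ p → (∀ k, cfTail α k ∈ Icc p q) → ∀ k,
      cfTail α k ∈ Icc (1 / (2 + q)) (1 / (1 + p)) := by
    intro p q hp hpq k
    obtain ⟨h1, h2⟩ := hpq (k + 1)
    have h12 : (1 : ℝ) ≤ α k ∧ (α k : ℝ) ≤ 2 := by
      rcases h k with e | e <;> norm_num [e]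
    have ht := cfTail_pos h.pos (k + 1)
    rw [cfTail_eq h.pos]
    constructor
    · exact one_div_le_one_div_of_le (by linarith) (by linarith)
    · exact one_div_le_one_div_of_le (by linarith) (by linarith)
  have h0 : ∀ k, cfTail α k ∈ Icc (0 : ℝ) 1 := by
    intro k
    refine ⟨(cfTail_pos h.pos k).le, ?_⟩
    have h1 := one_le_cfVal (a := fun n => (α (k + n) : ℝ)) fun n => by exact_mod_cast h.pos _
    rw [cfTail, div_le_one (by linarith)]
    exact h1
  have h3 := key (by norm_num)
    (key (by norm_num) (key (by norm_num) (key (by norm_num) h0))) k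
  norm_num at h3 ⊢
  constructor <;> linarith [h3.1, h3.2]

theorem OneTwo.lambdaVal_le {α : ℤ → ℕ} (h : OneTwo α) (k : ℤ)
    (hk : ¬(α (k - 1) = 1 ∧ α k = 2 ∧ α (k + 1) = 1)) : lambdaVal α k ≤ 317 / 100 := by
  rw [lambdaVal_eq h.pos]
  have two : ∀ {β : ℤ → ℕ}, OneTwo β → ∀ j, β j = 2 → cfTail β j ≤ 11 / 26 := by
    intro β hβ j hj
    rw [cfTail_eq hβ.pos, hj]
    refine (one_div_le_one_div_of_le (by norm_num)
      (add_le_add_right (hβ.cfTail_mem (j + 1)).1 _)).trans (by norm_num)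
  have r := (h.cfTail_mem (k + 1)).2
  have l := (h.seqRev.cfTail_mem (1 - k)).2
  have hk1 := h (k - 1)
  have hk2 := h (k + 1)
  rcases h k with e | e
  · rw [e]; norm_num; linarith
  · by_cases e1 : α (k + 1) = 2
    · have := two h _ e1
      rw [e]; norm_num; linarith
    · have e2 : _root_.seqRev α (1 - k) = 2 := by
        simp only [_root_.seqRev, neg_sub]
        omega
      have := two h.seqRev _ e2
      rw [e]; norm_num; linarith

/-- If the word `w.reverse ++ 2 :: v` occurs then its central letter has a `λ` bounded below. -/
theorem OneTwo.le_lambdaVal_of_reads {α : ℤ → ℕ} (hα : OneTwo α) {p q : ℝ} (hp : 0 < p)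
    (h : ∀ k, cfTail α k ∈ Icc p q) (h' : ∀ k, cfTail (_root_.seqRev α) k ∈ Icc p q)
    (w v : List ℕ) (k : ℤ) (hw : Reads α k (w.reverse ++ 2 :: v)) :
    2 + (cfBounds p q w).1 + (cfBounds p q v).1 ≤ lambdaVal α (k + w.length) := by
  obtain ⟨h1, h2, h3⟩ := reads_reverse_append w _ k hw
  rw [lambdaVal_eq hα.pos, h2]
  have a := (cfTail_mem_cfBounds hα.pos hp h _ _ h3).1.1
  have b := (cfTail_mem_cfBounds hα.seqRev.pos hp h' _ _ h1).1.1
  push_cast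
  linarith

theorem OneTwo.lambdaVal_le_of_reads {α : ℤ → ℕ} (hα : OneTwo α) {p q : ℝ} (hp : 0 < p)
    (h : ∀ k, cfTail α k ∈ Icc p q) (h' : ∀ k, cfTail (_root_.seqRev α) k ∈ Icc p q)
    (w v : List ℕ) (k : ℤ) (hw : Reads α k (w.reverse ++ 2 :: v)) :
    lambdaVal α (k + w.length) ≤ 2 + (cfBounds p q w).2 + (cfBounds p q v).2 := by
  obtain ⟨h1, h2, h3⟩ := reads_reverse_append w _ k hw
  rw [lambdaVal_eq hα.pos, h2]
  have a := (cfTail_mem_cfBounds hα.pos hp h _ _ h3).1.2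
  have b := (cfTail_mem_cfBounds hα.seqRev.pos hp h' _ _ h1).1.2
  push_cast
  linarith

/-! ### Sequences below the right endpoint -/

/-- Sequences over `{1, 2}` all of whose `λ`-values are below the right endpoint. -/
structure Admissible (α : ℤ → ℕ) : Prop where
  oneTwo : OneTwo α
  lambdaVal_lt : ∀ k, lambdaVal α k < (332001 + 3760 * √30) / 110409

/-- The minimal tail `[0; 2, 1, 2, 2, 2, 1, 2, 2, ...]`. -/
noncomputable def minTail : ℝ := √30 / 4 - 1

theorem minTail_bounds : 3693 / 10000 < minTail ∧ minTail < 3694 / 10000 := by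
  have h1 : (54772 / 10000 : ℝ) < √30 := Real.lt_sqrt_of_sq_lt (by norm_num)
  have h2 : √30 < (54775 / 10000 : ℝ) := (Real.sqrt_lt' (by norm_num)).2 (by norm_num)
  constructor <;> rw [minTail] <;> linarith

theorem minTail_quadratic : 8 * minTail ^ 2 + 16 * minTail = 7 := by
  have h : √30 ^ 2 = (30 : ℝ) := Real.sq_sqrt (by norm_num)
  rw [minTail]
  linear_combination h / 2

theorem sqrt_thirty_eq : √30 = 4 * minTail + 4 := by
  rw [minTail]
  ring

theorem eq_minTail {t : ℝ} (ht : 0 < t) (h : t = 1 / (2 + 1 / (1 + 1 / (2 + 1 / (2 + t))))) :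
    t = minTail := by
  have hq : 8 * t ^ 2 + 16 * t = 7 := by
    field_simp at h
    linarith
  have hm := minTail_quadratic
  have h0 := minTail_bounds.1
  have : (t - minTail) * (8 * (t + minTail) + 16) = 0 := by linear_combination hq - hm
  rcases mul_eq_zero.1 this with h | h
  · linarith
  · linarith

theorem OneTwo.shift {α : ℤ → ℕ} (h : OneTwo α) (j : ℤ) : OneTwo fun n => α (j + n) :=
  fun n => h (j + n)

theorem Admissible.seqRev {α : ℤ → ℕ} (h : Admissible α) : Admissible (seqRev α) :=
  ⟨h.oneTwo.seqRev, fun k => by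
    rw [lambdaVal_seqRev h.oneTwo.pos]
    exact h.lambdaVal_lt _⟩

theorem Admissible.shift {α : ℤ → ℕ} (h : Admissible α) (j : ℤ) :
    Admissible fun n => α (j + n) :=
  ⟨h.oneTwo.shift j, fun k => by
    rw [lambdaVal_shift]
    exact h.lambdaVal_lt _⟩

theorem left_endpoint_bounds :
    317 / 100 < (15 - √30) / 3 ∧ (15 - √30) / 3 < (319 / 100 : ℝ) := by
  have h1 : (54772 / 10000 : ℝ) < √30 := Real.lt_sqrt_of_sq_lt (by norm_num)
  have h2 : √30 < (54775 / 10000 : ℝ) := (Real.sqrt_lt' (by norm_num)).2 (by norm_num)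
  constructor <;> linarith

theorem right_endpoint_lt : (332001 + 3760 * √30) / 110409 < (319354 / 100000 : ℝ) := by
  have h : √30 < (5477226 / 1000000 : ℝ) := (Real.sqrt_lt' (by norm_num)).2 (by norm_num)
  linarith

theorem Admissible.of_lambdaVal_lt {α : ℤ → ℕ} (hα : ∀ n, 0 < α n)
    (h : ∀ k, lambdaVal α k < (332001 + 3760 * √30) / 110409) : Admissible α := by
  refine ⟨fun n => ?_, h⟩
  have hr := right_endpoint_lt
  have lt4 : ∀ k, (α k : ℝ) < 4 := fun k => by
    have := h k
    rw [lambdaVal_eq hα] at this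
    have h1 := cfTail_pos hα (k + 1)
    have h2 := cfTail_pos (α := _root_.seqRev α) (fun n => hα (-n)) (1 - k)
    linarith
  have hfifth : cfTail α (n + 1) > 1 / 5 := by
    have h1 : cfTail α (n + 1 + 1) ≤ 1 := by
      have h1 := one_le_cfVal (a := fun i => (α (n + 1 + 1 + i) : ℝ)) fun i => by
        exact_mod_cast hα _
      rw [cfTail, div_le_one (by linarith)]
      exact h1
    have h2 := cfTail_pos hα (n + 1 + 1)
    rw [cfTail_eq hα]
    exact one_div_lt_one_div_of_lt (by positivity) (by linarith [lt4 (n + 1)])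
  have h3 := h n
  rw [lambdaVal_eq hα] at h3
  have h2 := cfTail_pos (α := _root_.seqRev α) (fun n => hα (-n)) (1 - n)
  have : (α n : ℝ) < 3 := by linarith
  have : α n < 3 := by exact_mod_cast this
  have := hα n
  omega

theorem Admissible.not_reads_of_bounds {α : ℤ → ℕ} (hα : Admissible α) {p q : ℝ} (hp : 0 < p)
    (h : ∀ k, cfTail α k ∈ Icc p q) (h' : ∀ k, cfTail (_root_.seqRev α) k ∈ Icc p q)
    (w v : List ℕ) (hb : 319354 / 100000 ≤ 2 + (cfBounds p q w).1 + (cfBounds p q v).1)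
    (k : ℤ) : ¬Reads α k (w.reverse ++ 2 :: v) := fun hr => by
  have h1 := hα.oneTwo.le_lambdaVal_of_reads hp h h' w v k hr
  linarith [hα.lambdaVal_lt (k + w.length), right_endpoint_lt]

theorem Admissible.not_reads_2121 {α : ℤ → ℕ} (hα : Admissible α) (k : ℤ) :
    ¬Reads α k [2, 1, 2, 1] :=
  hα.not_reads_of_bounds (by norm_num) hα.oneTwo.cfTail_mem hα.oneTwo.seqRev.cfTail_mem
    [1, 2] [1] (by norm_num [cfBounds]) k

theorem Admissible.not_reads_1212 {α : ℤ → ℕ} (hα : Admissible α) (k : ℤ) :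
    ¬Reads α k [1, 2, 1, 2] :=
  hα.not_reads_of_bounds (by norm_num) hα.oneTwo.cfTail_mem hα.oneTwo.seqRev.cfTail_mem
    [1] [1, 2] (by norm_num [cfBounds]) k

theorem minTail_sub_le {t : ℝ} (ht : 0 < t) {c : ℝ} (hc : 0 ≤ c) (h : minTail - t ≤ c) :
    minTail - 1 / (2 + 1 / (1 + 1 / (2 + 1 / (2 + t)))) ≤ c / 2 := by
  have hm := minTail_bounds.1
  have hq := minTail_quadratic
  have e : minTail - 1 / (2 + 1 / (1 + 1 / (2 + 1 / (2 + t)))) =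
      (minTail - t) / ((19 + 8 * minTail) * (19 + 8 * t)) := by
    have h1 : 1 / (2 + 1 / (1 + 1 / (2 + 1 / (2 + t)))) = (7 + 3 * t) / (19 + 8 * t) := by
      field_simp
      ring
    rw [h1]
    field_simp
    linear_combination (19 + 8 * t) * hq
  rw [e, div_le_iff₀ (by positivity)]
  have : 2 ≤ (19 + 8 * minTail) * (19 + 8 * t) := by nlinarith
  nlinarith

theorem OneTwo.minTail_le_cfTail {α : ℤ → ℕ} (hα : OneTwo α)
    (h2121 : ∀ k, ¬Reads α k [2, 1, 2, 1]) (k : ℤ) : minTail ≤ cfTail α k := by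
  have hm := minTail_bounds
  have key : ∀ (n : ℕ) (k : ℤ), minTail - cfTail α k ≤ (1 / 2) ^ n := by
    intro n
    induction n with
    | zero => intro k; linarith [cfTail_pos hα.pos k]
    | succ n ih =>
      intro k
      have hn : (0 : ℝ) < (1 / 2) ^ (n + 1) := by positivity
      suffices h : 3694 / 10000 ≤ cfTail α k ∨ (α k = 2 ∧ α (k + 1) = 1 ∧ α (k + 1 + 1) = 2 ∧
          α (k + 1 + 1 + 1) = 2) by
        rcases h with h | ⟨e0, e1, e2, e3⟩
        · linarith
        · rw [cfTail_eq hα.pos, cfTail_eq hα.pos, cfTail_eq hα.pos (_ + 1 + 1),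
            cfTail_eq hα.pos (_ + 1 + 1 + 1), e0, e1, e2, e3]
          have := minTail_sub_le (cfTail_pos hα.pos _) (by positivity)
            (ih (k + 1 + 1 + 1 + 1))
          rw [pow_succ]
          push_cast
          linarith
      by_contra! hcon
      obtain ⟨hlt, hcon⟩ := hcon
      have word : ∀ w, Reads α k w →
          (cfBounds (4 / 11) (11 / 15) w).1 < 3694 / 10000 := fun w hw =>
        ((cfTail_mem_cfBounds hα.pos (by norm_num) hα.cfTail_mem w k hw).1.1).trans_lt hlt
      have e0 : α k = 2 := (hα k).resolve_left fun e => by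
        have := word [1] ⟨e, trivial⟩
        norm_num [cfBounds] at this
      have e1 : α (k + 1) = 1 := (hα _).resolve_right fun e => by
        have := word [2, 2] ⟨e0, e, trivial⟩
        norm_num [cfBounds] at this
      have e2 : α (k + 1 + 1) = 2 := (hα _).resolve_left fun e => by
        have := word [2, 1, 1] ⟨e0, e1, e, trivial⟩
        norm_num [cfBounds] at this
      exact hcon e0 e1 e2
        ((hα _).resolve_left fun e => h2121 k ⟨e0, e1, e2, e, trivial⟩)
  refine sub_nonpos.1 (ge_of_tendsto' (tendsto_pow_atTop_nhds_zero_of_lt_one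
    (by norm_num : (0 : ℝ) ≤ 1 / 2) (by norm_num)) fun n => key n k)

theorem Admissible.cfTail_mem {α : ℤ → ℕ} (hα : Admissible α) (k : ℤ) :
    cfTail α k ∈ Icc minTail (1 / (1 + minTail)) := by
  have hm := minTail_bounds.1
  have h := hα.oneTwo.minTail_le_cfTail hα.not_reads_2121
  refine ⟨h k, ?_⟩
  rw [cfTail_eq hα.oneTwo.pos]
  have h1 : (1 : ℝ) ≤ α k := by exact_mod_cast hα.oneTwo.pos k
  exact one_div_le_one_div_of_le (by linarith) (by linarith [h (k + 1)])

theorem Admissible.not_reads {α : ℤ → ℕ} (hα : Admissible α) (w v : List ℕ)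
    (hb : 319354 / 100000 ≤ 2 + (cfBounds (3693 / 10000) (7304 / 10000) w).1 +
      (cfBounds (3693 / 10000) (7304 / 10000) v).1) (k : ℤ) :
    ¬Reads α k (w.reverse ++ 2 :: v) := by
  have hm := minTail_bounds.1
  have hM : 1 / (1 + minTail) ≤ 7304 / 10000 :=
    (one_div_le_one_div_of_le (by norm_num) (by linarith : (1 + 3693 / 10000 : ℝ) ≤ _)).trans
      (by norm_num)
  have hsub := Icc_subset_Icc hm.le hM
  exact hα.not_reads_of_bounds (by norm_num) (fun k => hsub (hα.cfTail_mem k))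
    (fun k => hsub (hα.seqRev.cfTail_mem k)) w v hb k

theorem cf_112_minTail : 1 / (1 + 1 / (1 + 1 / (2 + minTail))) = 5 / 6 - 2 / 3 * minTail := by
  have hm := minTail_bounds.1
  field_simp
  linear_combination 3 * minTail_quadratic

theorem Admissible.lambdaVal_le_left {α : ℤ → ℕ} (hα : Admissible α) (k : ℤ)
    (h : Reads α k [2, 1, 1, 2, 1, 1, 2]) : lambdaVal α (k + 3) ≤ (15 - √30) / 3 := by
  have hm := minTail_bounds.1
  have h1 := hα.oneTwo.lambdaVal_le_of_reads (by linarith) hα.cfTail_mem hα.seqRev.cfTail_mem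
    [1, 1, 2] [1, 1, 2] k h
  refine h1.trans_eq ?_
  simp only [cfBounds, Nat.cast_one, Nat.cast_ofNat, cf_112_minTail, sqrt_thirty_eq]
  ring

/-! ### The two-sided block `1111 2 11 2 1111` -/

/-- `[0; 1, 1, 1, 1, 2, 2, t]` as a Möbius function. -/
theorem cf_111122 {t : ℝ} (ht : 0 < t) :
    1 / (1 + 1 / (1 + 1 / (1 + 1 / (1 + 1 / (2 + 1 / (2 + t)))))) =
      (19 + 8 * t) / (31 + 13 * t) := by
  field_simp
  ring

/-- `[0; 1, 1, 2, 1, 1, 1, 1, 2, 2, t]` as a Möbius function. -/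
theorem cf_112111122 {t : ℝ} (ht : 0 < t) :
    1 / (1 + 1 / (1 + 1 / (2 + 1 / (1 + 1 / (1 + 1 / (1 + 1 / (1 + 1 / (2 + 1 / (2 + t))))))))) =
      (112 + 47 * t) / (193 + 81 * t) := by
  rw [cf_111122 ht]
  field_simp
  ring

theorem cf_sum_minTail :
    2 + (19 + 8 * minTail) / (31 + 13 * minTail) + (112 + 47 * minTail) / (193 + 81 * minTail) =
      (332001 + 3760 * √30) / 110409 := by
  have hm := minTail_bounds.1
  have h1 : (19 + 8 * minTail) / (31 + 13 * minTail) = 32 / 57 + 8 / 57 * minTail := by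
    field_simp
    linear_combination -13 * minTail_quadratic
  have h2 : (112 + 47 * minTail) / (193 + 81 * minTail) = 1127 / 1937 - 8 / 1937 * minTail := by
    field_simp
    linear_combination 81 * minTail_quadratic
  rw [h1, h2, sqrt_thirty_eq]
  ring

theorem right_endpoint_le_of_minTail_le {s t : ℝ} (hs : minTail ≤ s) (hst : s ≤ t) :
    (332001 + 3760 * √30) / 110409 ≤
      2 + (19 + 8 * t) / (31 + 13 * t) + (112 + 47 * s) / (193 + 81 * s) := by
  have hm := minTail_bounds.1
  have hs0 : 0 < s := by linarith
  have ht0 : 0 < t := by linarith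
  have hm0 : 0 < minTail := by linarith
  rw [← cf_sum_minTail]
  have h1 : (19 + 8 * s) / (31 + 13 * s) ≤ (19 + 8 * t) / (31 + 13 * t) := by
    rw [div_le_div_iff₀ (by positivity) (by positivity)]
    nlinarith
  have e1 : (19 + 8 * s) / (31 + 13 * s) - (19 + 8 * minTail) / (31 + 13 * minTail) =
      (s - minTail) / ((31 + 13 * s) * (31 + 13 * minTail)) := by
    field_simp
    ring
  have e2 : (112 + 47 * minTail) / (193 + 81 * minTail) - (112 + 47 * s) / (193 + 81 * s) =
      (s - minTail) / ((193 + 81 * s) * (193 + 81 * minTail)) := by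
    field_simp
    ring
  have h2 : (s - minTail) / ((193 + 81 * s) * (193 + 81 * minTail)) ≤
      (s - minTail) / ((31 + 13 * s) * (31 + 13 * minTail)) := by
    have : 0 ≤ s - minTail := by linarith
    gcongr <;> linarith
  linarith

/-- The finite continued fraction `[0; w, t]`. -/
noncomputable def cfFold : List ℕ → ℝ → ℝ
  | [], t => t
  | a :: w, t => 1 / (a + cfFold w t)

theorem cfTail_eq_cfFold {α : ℤ → ℕ} (hα : ∀ n, 0 < α n) (w : List ℕ) (k : ℤ)
    (h : Reads α k w) :
    cfTail α k = cfFold w (cfTail α (k + w.length)) := by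
  induction w generalizing k with
  | nil => simp [cfFold]
  | cons a w ih =>
    rw [cfTail_eq hα, h.1, ih _ h.2, cfFold, List.length_cons]
    push_cast
    rw [add_assoc k 1, add_comm (1 : ℤ)]

theorem lambdaVal_eq_cfFold {α : ℤ → ℕ} (hα : ∀ n, 0 < α n) (w v : List ℕ) (k : ℤ)
    (h : Reads α k (w.reverse ++ 2 :: v)) :
    lambdaVal α (k + w.length) =
      2 + cfFold w (cfTail (seqRev α) (1 - k)) +
        cfFold v (cfTail α (k + w.length + 1 + v.length)) := by
  obtain ⟨h1, h2, h3⟩ := reads_reverse_append w _ k h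
  rw [lambdaVal_eq hα, h2, cfTail_eq_cfFold hα _ _ h3,
    cfTail_eq_cfFold (α := seqRev α) (fun n => hα (-n)) _ _ h1, sub_add_eq_sub_sub, sub_add_cancel]
  push_cast
  ring

theorem Admissible.not_reads_2211112112111122 {α : ℤ → ℕ} (hα : Admissible α) (k : ℤ) :
    ¬Reads α k [2, 2, 1, 1, 1, 1, 2, 1, 1, 2, 1, 1, 1, 1, 2, 2] := fun h => by
  have hpos := hα.oneTwo.pos
  have h1 := lambdaVal_eq_cfFold hpos [1, 1, 1, 1, 2, 2] [1, 1, 2, 1, 1, 1, 1, 2, 2] k h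
  have h2 := lambdaVal_eq_cfFold hpos [1, 1, 2, 1, 1, 1, 1, 2, 2] [1, 1, 1, 1, 2, 2] k h
  have hs := (hα.seqRev.cfTail_mem (1 - k)).1
  have ht := (hα.cfTail_mem (k + 16)).1
  have hs0 := cfTail_pos hα.seqRev.oneTwo.pos (1 - k)
  have ht0 := cfTail_pos hpos (k + 16)
  have lt1 := hα.lambdaVal_lt (k + 6)
  have lt2 := hα.lambdaVal_lt (k + 9)
  norm_num only [List.length_cons, List.length_nil, cfFold, add_assoc,
    Nat.cast_ofNat, Nat.cast_one] at h1 h2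
  rw [cf_111122 hs0, cf_112111122 ht0] at h1
  rw [cf_111122 ht0, cf_112111122 hs0] at h2
  rcases le_total (cfTail (_root_.seqRev α) (1 - k)) (cfTail α (k + 16)) with hle | hle
  · linarith [right_endpoint_le_of_minTail_le hs hle]
  · linarith [right_endpoint_le_of_minTail_le ht hle]

/-- One period of the isolated periodic sequence. -/
def gapWord : List ℕ := [1, 1, 1, 1, 2, 1, 1, 2]

theorem Admissible.reads_gapWord_four {α : ℤ → ℕ} (hα : Admissible α)
    (h : Reads α (-4) gapWord) : Reads α 4 gapWord := by
  have ot := hα.oneTwo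
  have f1112111 := hα.not_reads [1, 1, 1] [1, 1, 1] (by norm_num [cfBounds])
  have f121112 := hα.not_reads [1] [1, 1, 1, 2] (by norm_num [cfBounds])
  have f1211111 := hα.not_reads [1] [1, 1, 1, 1, 1] (by norm_num [cfBounds])
  have f1111121 := hα.not_reads [1, 1, 1, 1, 1] [1] (by norm_num [cfBounds])
  have f11121122 := hα.not_reads [1, 1, 1] [1, 1, 2, 2] (by norm_num [cfBounds])
  have f22112111 := hα.not_reads [1, 1, 2, 2] [1, 1, 1] (by norm_num [cfBounds])
  have f2211112112112 := hα.not_reads [1, 1, 1, 1, 2, 2] [1, 1, 2, 1, 1, 2]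
    (by norm_num [cfBounds])
  have f1211112112111122 := hα.not_reads [1, 1, 2, 1, 1, 1, 1, 2, 1] [1, 1, 1, 1, 2, 2]
    (by norm_num [cfBounds])
  have f2211112112111121 := hα.not_reads [1, 1, 1, 1, 2, 2] [1, 1, 2, 1, 1, 1, 1, 2, 1]
    (by norm_num [cfBounds])
  have f1211211112112112 := hα.not_reads [1, 1, 1, 1, 2, 1, 1, 2, 1] [1, 1, 2, 1, 1, 2]
    (by norm_num [cfBounds])
  norm_num [Reads, gapWord] at h
  obtain ⟨n4, n3, n2, n1, a0, a1, a2, a3⟩ := h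
  have a4 : α 4 = 1 := (ot 4).resolve_right fun e =>
    f11121122 (-3) (by norm_num [Reads, *])
  have a5 : α 5 = 1 := (ot 5).resolve_right fun e =>
    hα.not_reads_1212 2 (by norm_num [Reads, *])
  have n5 : α (-5) = 2 := (ot (-5)).resolve_left fun e =>
    f1111121 (-5) (by norm_num [Reads, *])
  have a78 : α 6 = 1 → α 7 = 1 ∧ α 8 = 2 := fun a6 => by
    have a7 : α 7 = 1 := (ot 7).resolve_right fun e => f121112 2 (by norm_num [Reads, *])
    exact ⟨a7, (ot 8).resolve_left fun e => f1211111 2 (by norm_num [Reads, *])⟩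
  rcases ot (-6) with n6 | n6
  · have n7 : α (-7) = 1 := (ot (-7)).resolve_right fun e =>
      hα.not_reads_2121 (-7) (by norm_num [Reads, *])
    have n8 : α (-8) = 2 := (ot (-8)).resolve_left fun e =>
      f1112111 (-8) (by norm_num [Reads, *])
    have n9 : α (-9) = 1 := (ot (-9)).resolve_right fun e =>
      f22112111 (-9) (by norm_num [Reads, *])
    have a6 : α 6 = 1 := (ot 6).resolve_right fun e =>
      f1211211112112112 (-9) (by norm_num [Reads, *])
    obtain ⟨a7, a8⟩ := a78 a6
    have a9 : α 9 = 1 := (ot 9).resolve_right fun e =>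
      f1211112112111122 (-6) (by norm_num [Reads, *])
    have a10 : α 10 = 1 := (ot 10).resolve_right fun e =>
      hα.not_reads_1212 7 (by norm_num [Reads, *])
    have a11 : α 11 = 2 := (ot 11).resolve_left fun e =>
      f1112111 5 (by norm_num [Reads, *])
    norm_num [Reads, gapWord, *]
  · exfalso
    have a6 : α 6 = 1 := (ot 6).resolve_right fun e =>
      f2211112112112 (-6) (by norm_num [Reads, *])
    obtain ⟨a7, a8⟩ := a78 a6
    rcases ot 9 with a9 | a9
    · exact f2211112112111121 (-6) (by norm_num [Reads, *])
    · exact hα.not_reads_2211112112111122 (-6) (by norm_num [Reads, *])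

theorem reads_shift (α : ℤ → ℕ) (j k : ℤ) (w : List ℕ) :
    Reads (fun n => α (j + n)) k w ↔ Reads α (j + k) w := by
  induction w generalizing k with
  | nil => simp [Reads]
  | cons a w ih => simp only [Reads, ih, add_assoc]

/-- The `8`-periodic sequence with period `2, 1, 1, 2, 1, 1, 1, 1`. -/
def gapSeq : ℤ → ℕ := fun n => if n % 8 = 0 ∨ n % 8 = 3 then 2 else 1

theorem Admissible.eq_gapSeq_of_ge {α : ℤ → ℕ} (hα : Admissible α)
    (h : Reads α (-4) gapWord) (i : ℤ) (hi : -4 ≤ i) : α i = gapSeq i := by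
  have key : ∀ n : ℕ, Reads α (8 * n + -4) gapWord := by
    intro n
    induction n with
    | zero => simpa using h
    | succ n ih =>
      have h2 := (hα.shift (8 * n)).reads_gapWord_four ((reads_shift _ _ _ _).2 ih)
      rw [reads_shift] at h2
      convert h2 using 1
      push_cast
      ring
  obtain ⟨n, hn⟩ := Int.eq_ofNat_of_zero_le (by omega : 0 ≤ (i + 4) / 8)
  have hr := key n
  simp only [Reads, gapWord, add_assoc] at hr
  norm_num at hr
  obtain ⟨h0, h1, h2, h3, h4, h5, h6, h7⟩ := hr
  have hcases : i = 8 * n + -4 ∨ i = 8 * n + -3 ∨ i = 8 * n + -2 ∨ i = 8 * n + -1 ∨ i = 8 * n ∨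
    i = 8 * n + 1 ∨ i = 8 * n + 2 ∨ i = 8 * n + 3 := by omega
  rw [gapSeq]
  rcases hcases with e | e | e | e | e | e | e | e <;> rw [e] <;>
    simp only [h0, h1, h2, h3, h4, h5, h6, h7] <;> split_ifs <;> omega

theorem Admissible.eq_gapSeq {α : ℤ → ℕ} (hα : Admissible α) (h : Reads α (-4) gapWord)
    (i : ℤ) : α i = gapSeq i := by
  rcases le_total (-4) i with hi | hi
  · exact hα.eq_gapSeq_of_ge h i hi
  · have h4 := hα.reads_gapWord_four h
    have hr : Reads (fun n => _root_.seqRev α (-3 + n)) (-4) gapWord := by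
      norm_num [Reads, gapWord, _root_.seqRev] at h h4 ⊢
      simp [h, h4]
    have := (hα.seqRev.shift (-3)).eq_gapSeq_of_ge hr (3 - i) (by omega)
    simp only [_root_.seqRev, gapSeq] at this ⊢
    rw [show -(-3 + (3 - i)) = i by ring] at this
    rw [this]
    split_ifs <;> omega

/-! ### Markov values of symmetric and shifted sequences -/

theorem markovValue_shift (α : ℤ → ℕ) (j : ℤ) :
    markovValue (fun n => α (j + n)) = markovValue α := by
  simp only [markovValue, lambdaVal_shift]
  exact (Equiv.addLeft j).iSup_comp (g := lambdaVal α)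

theorem markovValue_seqRev {α : ℤ → ℕ} (hα : ∀ n, 0 < α n) :
    markovValue (seqRev α) = markovValue α := by
  simp only [markovValue, lambdaVal_seqRev hα]
  exact (Equiv.neg ℤ).iSup_comp (g := lambdaVal α)

theorem markovValue_eq_of_forall_le {α : ℤ → ℕ} (k : ℤ)
    (h : ∀ j, lambdaVal α j ≤ lambdaVal α k) : markovValue α = lambdaVal α k :=
  le_antisymm (ciSup_le h) (le_ciSup (f := lambdaVal α) ⟨_, forall_mem_range.2 h⟩ k)

theorem lambdaVal_mem_markovSpectrum {α : ℤ → ℕ} (hα : ∀ n, 0 < α n) (k : ℤ)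
    (h : ∀ j, lambdaVal α j ≤ lambdaVal α k) : lambdaVal α k ∈ markovSpectrum :=
  ⟨α, hα, ⟨_, forall_mem_range.2 h⟩, markovValue_eq_of_forall_le k h⟩

theorem Admissible.reads_gapWord {α : ℤ → ℕ} (hα : Admissible α)
    (h : (15 - √30) / 3 < lambdaVal α 0) :
    Reads α (-4) gapWord ∨ Reads (_root_.seqRev α) (-4) gapWord := by
  have ot := hα.oneTwo
  have h121 : α (-1) = 1 ∧ α 0 = 2 ∧ α 1 = 1 := by
    by_contra hcon
    have := ot.lambdaVal_le 0 (by simpa using hcon)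
    linarith [left_endpoint_bounds.1]
  obtain ⟨n1, a0, a1⟩ := h121
  have a2 : α 2 = 1 := (ot 2).resolve_right fun e =>
    hα.not_reads_1212 (-1) (by norm_num [Reads, *])
  have n2 : α (-2) = 1 := (ot (-2)).resolve_right fun e =>
    hα.not_reads_2121 (-2) (by norm_num [Reads, *])
  rcases ot 3 with a3 | a3 <;> rcases ot (-3) with n3 | n3
  · exact absurd (by norm_num [Reads, *])
      (hα.not_reads [1, 1, 1] [1, 1, 1] (by norm_num [cfBounds]) (-3))
  · have a4 : α 4 = 1 := (ot 4).resolve_right fun e =>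
      hα.not_reads [1] [1, 1, 1, 2] (by norm_num [cfBounds]) (-1) (by norm_num [Reads, *])
    right
    norm_num [Reads, gapWord, _root_.seqRev, *]
  · have n4 : α (-4) = 1 := (ot (-4)).resolve_right fun e =>
      hα.not_reads [1, 1, 1, 2] [1] (by norm_num [cfBounds]) (-4) (by norm_num [Reads, *])
    left
    norm_num [Reads, gapWord, *]
  · have := hα.lambdaVal_le_left (-3) (by norm_num [Reads, *])
    norm_num at this
    linarith

/-! ### The isolated point -/

theorem gapSeq_oneTwo : OneTwo gapSeq := fun n => by
  rw [gapSeq]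
  split_ifs <;> simp

theorem cfTail_gapSeq_congr {i j : ℤ} (h : i % 8 = j % 8) : cfTail gapSeq i = cfTail gapSeq j :=
  cfTail_congr fun n => by
    have : (i + n) % 8 = (j + n) % 8 := by omega
    simp only [gapSeq, this]

theorem cfTail_seqRev_gapSeq (k : ℤ) : cfTail (seqRev gapSeq) k = cfTail gapSeq (k + 3) :=
  cfTail_congr fun n => by
    simp only [seqRev, gapSeq]
    split_ifs <;> omega

theorem eq_of_quadratic {x a b : ℝ} (hx : 0 < 62 * x + a) (h : (62 * x + a) ^ 2 = b) :
    x = (√b - a) / 62 := by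
  rw [← h, Real.sqrt_sq hx.le]
  ring

theorem cfTail_gapSeq_add :
    cfTail gapSeq 1 + cfTail gapSeq 4 = √9797 / 31 - 2 := by
  have hx := cfTail_pos gapSeq_oneTwo.pos 1
  have hy := cfTail_pos gapSeq_oneTwo.pos 4
  have e1 := cfTail_eq_cfFold gapSeq_oneTwo.pos [1, 1, 2] 1 (by norm_num [Reads, gapSeq])
  have e2 := cfTail_eq_cfFold gapSeq_oneTwo.pos [1, 1, 1, 1, 2] 4 (by norm_num [Reads, gapSeq])
  norm_num only [cfFold, List.length_cons, List.length_nil, Nat.cast_ofNat, Nat.cast_one] at e1 e2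
  rw [cfTail_gapSeq_congr (i := 9) (j := 1) (by norm_num)] at e2
  generalize cfTail gapSeq 1 = x at *
  generalize cfTail gapSeq 4 = y at *
  have h1 : x * (5 + 2 * y) = 3 + y := by
    rw [e1]
    field_simp
    ring
  have h2 : y * (13 + 5 * x) = 8 + 3 * x := by
    rw [e2]
    field_simp
    ring
  have qx : (62 * x + 63) ^ 2 = 9797 := by
    linear_combination 124 * ((13 + 5 * x) * h1 + (1 - 2 * x) * h2)
  have qy : (62 * y + 61) ^ 2 = 9797 := by
    linear_combination 124 * ((5 + 2 * y) * h2 + (3 - 5 * y) * h1)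
  rw [eq_of_quadratic (by positivity) qx, eq_of_quadratic (by positivity) qy]
  ring

theorem lambdaVal_gapSeq {k : ℤ} (hk : gapSeq k = 2) : lambdaVal gapSeq k = √9797 / 31 := by
  have h : k % 8 = 0 ∨ k % 8 = 3 := by
    rw [gapSeq] at hk
    split_ifs at hk with h
    · exact h
    · omega
  rw [lambdaVal_eq gapSeq_oneTwo.pos, cfTail_seqRev_gapSeq, hk]
  have e := cfTail_gapSeq_add
  rcases h with h | h
  · rw [cfTail_gapSeq_congr (i := k + 1) (j := 1) (by omega),
      cfTail_gapSeq_congr (i := 1 - k + 3) (j := 4) (by omega)]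
    push_cast
    linarith
  · rw [cfTail_gapSeq_congr (i := k + 1) (j := 4) (by omega),
      cfTail_gapSeq_congr (i := 1 - k + 3) (j := 1) (by omega)]
    push_cast
    linarith

theorem sqrt_9797_bounds : 3192 / 1000 < √9797 / 31 ∧ √9797 / 31 < (3193 / 1000 : ℝ) := by
  have h1 : (98953 / 1000 : ℝ) < √9797 := Real.lt_sqrt_of_sq_lt (by norm_num)
  have h2 : √9797 < (98982 / 1000 : ℝ) := (Real.sqrt_lt' (by norm_num)).2 (by norm_num)
  constructor <;> linarith

theorem lambdaVal_gapSeq_le (k : ℤ) : lambdaVal gapSeq k ≤ lambdaVal gapSeq 0 := by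
  rw [lambdaVal_gapSeq (k := 0) rfl]
  by_cases hk : gapSeq k = 2
  · exact (lambdaVal_gapSeq hk).le
  · exact (gapSeq_oneTwo.lambdaVal_le k fun h => hk h.2.1).trans
      (by linarith [sqrt_9797_bounds.1])

/-! ### The left endpoint -/

/-- The symmetric sequence `… 1 2 2 2 1 2 2 1 1 2 1 1 2 2 1 2 2 2 1 …`. -/
def leftSeq : ℤ → ℕ := fun n => if n.natAbs % 4 = 1 ∨ n.natAbs = 2 then 1 else 2

theorem leftSeq_oneTwo : OneTwo leftSeq := fun n => by
  rw [leftSeq]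
  split_ifs <;> simp

theorem seqRev_leftSeq : seqRev leftSeq = leftSeq := by
  ext n
  simp [seqRev, leftSeq]

theorem cfTail_leftSeq : cfTail leftSeq 4 = minTail := by
  refine eq_minTail (cfTail_pos leftSeq_oneTwo.pos 4) ?_
  have e := cfTail_eq_cfFold leftSeq_oneTwo.pos [2, 1, 2, 2] 4 (by norm_num [Reads, leftSeq])
  norm_num only [cfFold, List.length_cons, List.length_nil, Nat.cast_ofNat, Nat.cast_one] at e
  have h : cfTail leftSeq 8 = cfTail leftSeq 4 := cfTail_congr fun n => by
    simp only [leftSeq]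
    split_ifs <;> omega
  rw [h] at e
  exact e

theorem lambdaVal_leftSeq : lambdaVal leftSeq 0 = (15 - √30) / 3 := by
  have e := lambdaVal_eq_cfFold leftSeq_oneTwo.pos [1, 1, 2] [1, 1, 2] (-3)
    (by norm_num [Reads, leftSeq])
  rw [seqRev_leftSeq] at e
  norm_num only [cfFold, List.length_cons, List.length_nil, Nat.cast_ofNat, Nat.cast_one,
    cfTail_leftSeq] at e
  rw [cf_112_minTail] at e
  rw [e, sqrt_thirty_eq]
  ring

theorem lambdaVal_leftSeq_le (k : ℤ) : lambdaVal leftSeq k ≤ lambdaVal leftSeq 0 := by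
  by_cases hk : leftSeq (k - 1) = 1 ∧ leftSeq k = 2 ∧ leftSeq (k + 1) = 1
  · have : k = 0 := by
      simp only [leftSeq] at hk
      split_ifs at hk <;> omega
    rw [this]
  · rw [lambdaVal_leftSeq]
    exact (leftSeq_oneTwo.lambdaVal_le k hk).trans left_endpoint_bounds.1.le

/-! ### The right endpoint -/

/-- The symmetric sequence `… 1 2 2 2 1 1 1 1 2 1 1 2 1 1 1 1 2 2 2 1 …`. -/
def rightSeq : ℤ → ℕ := fun n =>
  if max n (3 - n) = 3 ∨ 8 ≤ max n (3 - n) ∧ max n (3 - n) % 4 ≠ 3 then 2 else 1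

theorem rightSeq_oneTwo : OneTwo rightSeq := fun n => by
  rw [rightSeq]
  split_ifs <;> simp

theorem cfTail_seqRev_rightSeq (k : ℤ) :
    cfTail (seqRev rightSeq) k = cfTail rightSeq (k + 3) :=
  cfTail_congr fun n => by
    have h : max (-(k + n)) (3 - -(k + n)) = max (k + 3 + n) (3 - (k + 3 + n)) := by
      rw [max_comm]
      congr 1 <;> ring
    simp only [seqRev, rightSeq, h]

theorem cfTail_rightSeq : cfTail rightSeq 10 = minTail := by
  refine eq_minTail (cfTail_pos rightSeq_oneTwo.pos 10) ?_
  have e := cfTail_eq_cfFold rightSeq_oneTwo.pos [2, 1, 2, 2] 10 (by norm_num [Reads, rightSeq])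
  norm_num only [cfFold, List.length_cons, List.length_nil, Nat.cast_ofNat, Nat.cast_one] at e
  have h : cfTail rightSeq 14 = cfTail rightSeq 10 := cfTail_congr fun n => by
    simp only [rightSeq]
    split_ifs <;> omega
  rw [h] at e
  exact e

theorem lambdaVal_rightSeq :
    lambdaVal rightSeq 0 = (332001 + 3760 * √30) / 110409 ∧
      lambdaVal rightSeq 3 = (332001 + 3760 * √30) / 110409 := by
  have hm : 0 < minTail := by linarith [minTail_bounds.1]
  have e1 := lambdaVal_eq_cfFold rightSeq_oneTwo.pos [1, 1, 1, 1, 2, 2]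
    [1, 1, 2, 1, 1, 1, 1, 2, 2] (-6) (by norm_num [Reads, rightSeq])
  have e2 := lambdaVal_eq_cfFold rightSeq_oneTwo.pos [1, 1, 2, 1, 1, 1, 1, 2, 2]
    [1, 1, 1, 1, 2, 2] (-6) (by norm_num [Reads, rightSeq])
  rw [cfTail_seqRev_rightSeq] at e1 e2
  simp only [cfFold, List.length_cons, List.length_nil, Nat.cast_ofNat, Nat.cast_one] at e1 e2
  norm_num only [cfTail_rightSeq] at e1 e2
  rw [cf_112111122 hm, cf_111122 hm] at e1 e2
  rw [e1, e2, ← cf_sum_minTail]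
  exact ⟨rfl, by ring⟩

theorem right_endpoint_gt : (31935 / 10000 : ℝ) < (332001 + 3760 * √30) / 110409 := by
  have h : (5477 / 1000 : ℝ) < √30 := Real.lt_sqrt_of_sq_lt (by norm_num)
  linarith

theorem lambdaVal_rightSeq_le (k : ℤ) : lambdaVal rightSeq k ≤ lambdaVal rightSeq 0 := by
  obtain ⟨h0, h3⟩ := lambdaVal_rightSeq
  by_cases hk : rightSeq (k - 1) = 1 ∧ rightSeq k = 2 ∧ rightSeq (k + 1) = 1
  · have : k = 0 ∨ k = 3 := by
      simp only [rightSeq] at hk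
      split_ifs at hk <;> omega
    rcases this with rfl | rfl
    · exact le_rfl
    · rw [h0, h3]
  · rw [h0]
    exact (rightSeq_oneTwo.lambdaVal_le k hk).trans (by linarith [right_endpoint_gt])

/-- The intersection of the Markov spectrum with the open interval consists of
exactly one (hence isolated) point, and both endpoints belong to the Markov
spectrum. -/
theorem markov_gap_8 :
    markovSpectrum ∩ Ioo ((15 - Real.sqrt 30) / 3) ((332001 + 3760 * Real.sqrt 30) / 110409) = {(Real.sqrt 9797 / 31 : ℝ)} ∧
    ((15 - Real.sqrt 30) / 3) ∈ markovSpectrum ∧ ((332001 + 3760 * Real.sqrt 30) / 110409) ∈ markovSpectrum := by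
  refine ⟨?_, ?_, ?_⟩
  · refine Subset.antisymm ?_ (singleton_subset_iff.2 ⟨?_, ?_, ?_⟩)
    · rintro x ⟨⟨α, hpos, hbdd, rfl⟩, hl, hr⟩
      have hα : Admissible α := .of_lambdaVal_lt hpos fun k => (le_ciSup hbdd k).trans_lt hr
      obtain ⟨k, hk⟩ := exists_lt_of_lt_ciSup hl
      have hβ := hα.shift k
      have h0 : lambdaVal (fun n => α (k + n)) 0 = lambdaVal α k := by
        rw [lambdaVal_shift, add_zero]
      have hgap : markovValue gapSeq = √9797 / 31 := by
        rw [markovValue_eq_of_forall_le 0 lambdaVal_gapSeq_le, lambdaVal_gapSeq rfl]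
      rw [mem_singleton_iff, ← hgap, ← markovValue_shift α k]
      rcases hβ.reads_gapWord (h0 ▸ hk) with h | h
      · rw [funext (hβ.eq_gapSeq h)]
      · rw [← markovValue_seqRev hβ.oneTwo.pos, funext (hβ.seqRev.eq_gapSeq h)]
    · rw [← lambdaVal_gapSeq (k := 0) rfl]
      exact lambdaVal_mem_markovSpectrum gapSeq_oneTwo.pos 0 lambdaVal_gapSeq_le
    · linarith [left_endpoint_bounds.2, sqrt_9797_bounds.1]
    · linarith [right_endpoint_gt, sqrt_9797_bounds.2]
  · rw [← lambdaVal_leftSeq]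
    exact lambdaVal_mem_markovSpectrum leftSeq_oneTwo.pos 0 lambdaVal_leftSeq_le
  · rw [← lambdaVal_rightSeq.1]
    exact lambdaVal_mem_markovSpectrum rightSeq_oneTwo.pos 0 lambdaVal_rightSeq_le
end

section
/- The intersection of the Markov spectrum M with the open interval (28√213378/4287, (2497149255+2842763√213378)/1258910718) consists of exactly one point, namely √229/5, which is therefore an isolated point of M. Moreover, both endpoints 28√213378/4287 and (2497149255+2842763√213378)/1258910718 belong to M. -/
open Filter Set MeasureTheory
open scoped ENNReal

namespace MarkovGap

section ContinuedFraction

lemma one_le_cfConv {a : ℕ → ℝ} (ha : ∀ n, 1 ≤ a n) (n : ℕ) : 1 ≤ cfConv a n := by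
  induction n generalizing a with
  | zero => exact ha 0
  | succ n ih =>
    have h := ih (a := fun i => a (i + 1)) fun i => ha _
    have h' : 0 ≤ 1 / cfConv (fun i => a (i + 1)) n := by positivity
    rw [cfConv]
    linarith [ha 0]

lemma cfConv_mem_Icc {a : ℕ → ℝ} (ha : ∀ n, 1 ≤ a n) (n : ℕ) :
    cfConv a n ∈ Icc (a 0) (a 0 + 1) := by
  cases n with
  | zero => simp [cfConv]
  | succ n =>
    have h := one_le_cfConv (a := fun i => a (i + 1)) (fun i => ha _) n
    have h0 : 0 ≤ 1 / cfConv (fun i => a (i + 1)) n := by positivity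
    have h1 : 1 / cfConv (fun i => a (i + 1)) n ≤ 1 := by
      rw [div_le_one (by linarith)]; exact h
    rw [cfConv]
    constructor <;> linarith

lemma abs_sub_two_step_le {b x y : ℝ} (hb : 1 ≤ b) (hx : 1 ≤ x) (hy : 1 ≤ y) :
    |1 / (b + 1 / x) - 1 / (b + 1 / y)| ≤ 1 / 4 * |x - y| := by
  have hbx : 1 ≤ b * x := one_le_mul_of_one_le_of_one_le hb hx
  have hby : 1 ≤ b * y := one_le_mul_of_one_le_of_one_le hb hy
  have hx0 : 0 < x := by linarith
  have hy0 : 0 < y := by linarith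
  have key : 1 / (b + 1 / x) - 1 / (b + 1 / y) = 1 / ((b * x + 1) * (b * y + 1)) * (x - y) := by
    have : b + 1 / x = (b * x + 1) / x := by field_simp
    have : b + 1 / y = (b * y + 1) / y := by field_simp
    have : b * x + 1 ≠ 0 := by linarith
    have : b * y + 1 ≠ 0 := by linarith
    simp only [*, one_div_div]
    field_simp
    ring
  have hpos : 4 ≤ (b * x + 1) * (b * y + 1) := by nlinarith
  rw [key, abs_mul, abs_of_pos (by positivity)]
  gcongr

lemma abs_cfConv_sub_le {a : ℕ → ℝ} (ha : ∀ n, 1 ≤ a n) (N i j : ℕ) :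
    |cfConv a (i + 2 * N) - cfConv a (j + 2 * N)| ≤ (1 / 4) ^ N := by
  induction N generalizing a with
  | zero =>
    have hi := cfConv_mem_Icc ha i
    have hj := cfConv_mem_Icc ha j
    simp only [mul_zero, add_zero, pow_zero]
    rw [abs_le]
    constructor <;> linarith [hi.1, hi.2, hj.1, hj.2]
  | succ N ih =>
    have h := ih (a := fun n => a (n + 1 + 1)) fun n => ha _
    have hc := fun m => one_le_cfConv (a := fun n => a (n + 1 + 1)) (fun n => ha _) m
    have e (i : ℕ) : i + 2 * (N + 1) = i + 2 * N + 1 + 1 := by ring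
    rw [e, e, cfConv, cfConv, cfConv, cfConv, add_sub_add_left_eq_sub, pow_succ']
    exact (abs_sub_two_step_le (ha 1) (hc _) (hc _)).trans (by gcongr)

lemma tendsto_cfConv {a : ℕ → ℝ} (ha : ∀ n, 1 ≤ a n) :
    Tendsto (cfConv a) atTop (nhds (cfVal a)) := by
  refine tendsto_nhds_limUnder (cauchySeq_tendsto_of_complete
    (Metric.cauchySeq_iff.2 fun ε hε => ?_))
  obtain ⟨N, hN⟩ := exists_pow_lt_of_lt_one hε (show (1 / 4 : ℝ) < 1 by norm_num)
  refine ⟨2 * N, fun m hm n hn => ?_⟩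
  have h := abs_cfConv_sub_le ha N (m - 2 * N) (n - 2 * N)
  rw [Nat.sub_add_cancel hm, Nat.sub_add_cancel hn] at h
  rw [Real.dist_eq]
  exact h.trans_lt hN

lemma one_le_cfVal {a : ℕ → ℝ} (ha : ∀ n, 1 ≤ a n) : 1 ≤ cfVal a :=
  ge_of_tendsto' (tendsto_cfConv ha) (one_le_cfConv ha)

lemma cfVal_eq {a : ℕ → ℝ} (ha : ∀ n, 1 ≤ a (n + 1)) :
    cfVal a = a 0 + 1 / cfVal fun n => a (n + 1) := by
  have h1 := one_le_cfVal ha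
  have h : Tendsto (fun n => cfConv a (n + 1)) atTop
      (nhds (a 0 + 1 / cfVal fun n => a (n + 1))) := by
    simp only [cfConv]
    exact tendsto_const_nhds.add (tendsto_const_nhds.div (tendsto_cfConv ha) (by linarith))
  exact ((tendsto_add_atTop_iff_nat 1).1 h).limUnder_eq

/-- If two continued fractions first differ at index `n`, the order of the digits there decides
the order of the values. -/
lemma cfVal_le_of_first_diff {s t : ℕ → ℕ} (hs : ∀ n, 0 < s n) (ht : ∀ n, 0 < t n) {n : ℕ}
    (hst : ∀ i < n, s i = t i) (he : Even n → s n < t n) (ho : Odd n → t n < s n) :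
    cfVal (fun i => (s i : ℝ)) ≤ cfVal fun i => (t i : ℝ) := by
  have one_le {s : ℕ → ℕ} (hs : ∀ n, 0 < s n) (n : ℕ) : (1 : ℝ) ≤ s n := by exact_mod_cast hs n
  induction n generalizing s t with
  | zero =>
    have h0 : (s 0 : ℝ) + 1 ≤ t 0 := by exact_mod_cast he (by simp)
    have h1 := one_le_cfVal fun n => one_le hs (n + 1)
    have h2 := one_le_cfVal fun n => one_le ht (n + 1)
    have h3 : 1 / cfVal (fun n => (s (n + 1) : ℝ)) ≤ 1 := by
      rw [div_le_one (by linarith)]; exact h1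
    have h4 : 0 ≤ 1 / cfVal (fun n => (t (n + 1) : ℝ)) := by positivity
    rw [cfVal_eq fun n => one_le hs (n + 1),
      cfVal_eq (a := fun i => (t i : ℝ)) fun n => one_le ht (n + 1)]
    linarith
  | succ n ih =>
    have h := ih (s := fun i => t (i + 1)) (t := fun i => s (i + 1)) (fun i => ht _)
      (fun i => hs _) (fun i hi => (hst (i + 1) (by omega)).symm)
      (fun h => ho h.add_one) (fun h => he h.add_one)
    have h2 := one_le_cfVal fun n => one_le ht (n + 1)
    rw [cfVal_eq fun n => one_le hs (n + 1),
      cfVal_eq (a := fun i => (t i : ℝ)) fun n => one_le ht (n + 1),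
      hst 0 (by omega)]
    gcongr

lemma cfVal_le {s t : ℕ → ℕ} (hs : ∀ n, 0 < s n) (ht : ∀ n, 0 < t n)
    (h : ∀ n, (∀ i < n, s i = t i) → (Even n → s n ≤ t n) ∧ (Odd n → t n ≤ s n)) :
    cfVal (fun i => (s i : ℝ)) ≤ cfVal fun i => (t i : ℝ) := by
  classical
  by_cases hst : ∃ n, s n ≠ t n
  · have hne := Nat.find_spec hst
    have hlt : ∀ i < Nat.find hst, s i = t i := fun i hi => not_not.1 (Nat.find_min hst hi)
    obtain ⟨he, ho⟩ := h _ hlt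
    exact cfVal_le_of_first_diff hs ht hlt (fun hn => lt_of_le_of_ne (he hn) hne)
      fun hn => lt_of_le_of_ne (ho hn) hne.symm
  · push Not at hst
    rw [funext hst]

end ContinuedFraction

section TwoSided

/-- `[α_k; α_{k+1}, …]`. -/
noncomputable def fwd (α : ℤ → ℕ) (k : ℤ) : ℝ := cfVal fun n : ℕ => (α (k + n) : ℝ)

/-- `[α_{k-1}; α_{k-2}, …]`. -/
noncomputable def bwd (α : ℤ → ℕ) (k : ℤ) : ℝ := cfVal fun n : ℕ => (α (k - 1 - n) : ℝ)

variable {α : ℤ → ℕ}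

lemma one_le_cast (hα : ∀ n, 0 < α n) (n : ℤ) : (1 : ℝ) ≤ α n := by exact_mod_cast hα n

lemma one_le_fwd (hα : ∀ n, 0 < α n) (k : ℤ) : 1 ≤ fwd α k :=
  one_le_cfVal fun _ => one_le_cast hα _

lemma one_le_bwd (hα : ∀ n, 0 < α n) (k : ℤ) : 1 ≤ bwd α k :=
  one_le_cfVal fun _ => one_le_cast hα _

lemma fwd_eq (hα : ∀ n, 0 < α n) (k : ℤ) : fwd α k = α k + 1 / fwd α (k + 1) := by
  rw [fwd, cfVal_eq fun _ => one_le_cast hα _, fwd]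
  simp only [Nat.cast_zero, add_zero, Nat.cast_add, Nat.cast_one]
  congr! 6
  ring

lemma bwd_eq (hα : ∀ n, 0 < α n) (k : ℤ) : bwd α k = α (k - 1) + 1 / bwd α (k - 1) := by
  rw [bwd, cfVal_eq fun _ => one_le_cast hα _, bwd]
  simp only [Nat.cast_zero, sub_zero, Nat.cast_add, Nat.cast_one]
  congr! 6
  ring

lemma lambdaVal_eq (hα : ∀ n, 0 < α n) (k : ℤ) :
    lambdaVal α k = fwd α k + 1 / bwd α k := by
  rw [lambdaVal, cfVal_eq (a := fun n => if n = 0 then 0 else (α (k - n) : ℝ))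
    fun n => by simpa using one_le_cast hα _, fwd, bwd]
  simp [sub_sub, add_comm]

lemma lambdaVal_eq' (hα : ∀ n, 0 < α n) (k : ℤ) :
    lambdaVal α k = α k + 1 / fwd α (k + 1) + 1 / bwd α k := by
  rw [lambdaVal_eq hα, fwd_eq hα]

lemma bwd_neg (α : ℤ → ℕ) (k : ℤ) : bwd (fun n => α (-n)) k = fwd α (1 - k) := by
  simp only [bwd, fwd]
  congr! 4
  ring

lemma fwd_neg (α : ℤ → ℕ) (k : ℤ) : fwd (fun n => α (-n)) k = bwd α (1 - k) := by
  simp only [bwd, fwd]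
  congr! 4
  ring

lemma lambdaVal_neg (hα : ∀ n, 0 < α n) (k : ℤ) :
    lambdaVal (fun n => α (-n)) k = lambdaVal α (-k) := by
  rw [lambdaVal_eq fun n => hα _, bwd_neg, fwd_neg, lambdaVal_eq' hα, bwd_eq hα]
  have h1 : 1 - k - 1 = -k := by ring
  have h2 : -k + 1 = 1 - k := by ring
  rw [h1, h2]
  ring

lemma fwd_shift (α : ℤ → ℕ) (c k : ℤ) : fwd (fun n => α (n + c)) k = fwd α (k + c) := by
  simp only [fwd]
  congr! 4
  ring

lemma bwd_shift (α : ℤ → ℕ) (c k : ℤ) : bwd (fun n => α (n + c)) k = bwd α (k + c) := by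
  simp only [bwd]
  congr! 4
  ring

lemma lambdaVal_shift (hα : ∀ n, 0 < α n) (c k : ℤ) :
    lambdaVal (fun n => α (n + c)) k = lambdaVal α (k + c) := by
  rw [lambdaVal_eq fun n => hα _, lambdaVal_eq hα, fwd_shift, bwd_shift]

lemma fwd_le_three (hα : ∀ n, α n = 1 ∨ α n = 2) (k : ℤ) : fwd α k ≤ 3 := by
  have h0 : ∀ n, 0 < α n := fun n => by have := hα n; omega
  have h1 : 1 / fwd α (k + 1) ≤ 1 := by
    have := one_le_fwd h0 (k + 1)
    rwa [div_le_one (by linarith)]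
  have h2 : (α k : ℝ) ≤ 2 := by exact_mod_cast (show α k ≤ 2 by have := hα k; omega)
  rw [fwd_eq h0]
  linarith

end TwoSided

section Search

/-- Reading `α` to the right from index `k` begins with the word `w`. -/
def ReadsR (α : ℤ → ℕ) : ℤ → List ℕ → Prop
  | _, [] => True
  | k, d :: w => α k = d ∧ ReadsR α (k + 1) w

/-- Reading `α` to the left from index `k - 1` begins with the word `w`. -/
def ReadsL (α : ℤ → ℕ) : ℤ → List ℕ → Prop
  | _, [] => True
  | k, d :: w => α (k - 1) = d ∧ ReadsL α (k - 1) w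

variable {α : ℤ → ℕ}

lemma readsR_append {k : ℤ} {v w : List ℕ} :
    ReadsR α k (v ++ w) ↔ ReadsR α k v ∧ ReadsR α (k + v.length) w := by
  induction v generalizing k with
  | nil => simp [ReadsR]
  | cons d v ih =>
    have h : k + 1 + (v.length : ℤ) = k + ((d :: v).length : ℕ) := by simp; ring
    simp only [List.cons_append, ReadsR, ih, and_assoc, h]

lemma readsL_append {k : ℤ} {v w : List ℕ} :
    ReadsL α k (v ++ w) ↔ ReadsL α k v ∧ ReadsL α (k - v.length) w := by
  induction v generalizing k with
  | nil => simp [ReadsL]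
  | cons d v ih =>
    have h : k - 1 - (v.length : ℤ) = k - ((d :: v).length : ℕ) := by simp; ring
    simp only [List.cons_append, ReadsL, ih, and_assoc, h]

lemma readsL_neg {k : ℤ} {w : List ℕ} :
    ReadsL (fun n => α (-n)) k w ↔ ReadsR α (1 - k) w := by
  induction w generalizing k with
  | nil => simp [ReadsR, ReadsL]
  | cons d w ih =>
    have h1 : -(k - 1) = 1 - k := by ring
    have h2 : 1 - (k - 1) = 1 - k + 1 := by ring
    simp [ReadsR, ReadsL, ih, h1, h2]

lemma readsR_neg {k : ℤ} {w : List ℕ} :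
    ReadsR (fun n => α (-n)) k w ↔ ReadsL α (1 - k) w := by
  have h := readsL_neg (α := fun n => α (-n)) (k := 1 - k) (w := w)
  simp only [neg_neg, sub_sub_cancel] at h
  exact h.symm

lemma reads_move_right {k : ℤ} {L R : List ℕ} (v : List ℕ) (hL : ReadsL α k L)
    (hR : ReadsR α k (v ++ R)) :
    ReadsL α (k + v.length) (v.reverse ++ L) ∧ ReadsR α (k + v.length) R := by
  refine ⟨?_, (readsR_append.1 hR).2⟩
  replace hR := (readsR_append.1 hR).1
  induction v generalizing k L with
  | nil => simpa using hL
  | cons d v ih =>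
    have h := ih (k := k + 1) (L := d :: L) (by simpa [ReadsL] using ⟨hR.1, hL⟩) hR.2
    have e : k + 1 + (v.length : ℤ) = k + ((d :: v).length : ℕ) := by simp; ring
    rw [e] at h
    simpa using h

lemma reads_move_left {k : ℤ} {L R : List ℕ} (v : List ℕ) (hL : ReadsL α k (v ++ L))
    (hR : ReadsR α k R) :
    ReadsL α (k - v.length) L ∧ ReadsR α (k - v.length) (v.reverse ++ R) := by
  have h := reads_move_right (α := fun n => α (-n)) (k := 1 - k) v
    (readsL_neg.2 (by rwa [sub_sub_cancel])) (readsR_neg.2 (by rwa [sub_sub_cancel]))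
  rw [readsL_neg, readsR_neg, ← sub_sub, sub_sub_cancel] at h
  exact h.symm

/-- Fractions enclosing `[0; w, x]` for all `x ∈ [1, 3]`, as (numerator, denominator) pairs. -/
def bounds : List ℕ → (ℕ × ℕ) × (ℕ × ℕ)
  | [] => ((1, 3), (1, 1))
  | d :: w => match bounds w with
    | ((a, b), (c, e)) => ((e, d * e + c), (b, d * b + a))

/-- The enclosure of `x` between two fractions with positive terms. -/
def Encloses (p : (ℕ × ℕ) × (ℕ × ℕ)) (x : ℝ) : Prop :=
  (0 < p.1.1 ∧ 0 < p.1.2 ∧ 0 < p.2.1 ∧ 0 < p.2.2) ∧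
    (p.1.1 : ℝ) / p.1.2 ≤ x ∧ x ≤ (p.2.1 : ℝ) / p.2.2

lemma encloses_nil {y : ℝ} (h1 : 1 ≤ y) (h3 : y ≤ 3) : Encloses (bounds []) (1 / y) := by
  refine ⟨by simp [bounds], ?_, ?_⟩
  · simp only [bounds, Nat.cast_one, Nat.cast_ofNat]
    gcongr
  · simp only [bounds, Nat.cast_one, div_one]
    rwa [div_le_one (by linarith)]

lemma encloses_cons {d : ℕ} {w : List ℕ} {x : ℝ} (h : Encloses (bounds w) x) :
    Encloses (bounds (d :: w)) (1 / (d + x)) := by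
  rcases hp : bounds w with ⟨⟨a, b⟩, ⟨c, e⟩⟩
  rw [hp] at h
  obtain ⟨⟨ha, hb, hc, he⟩, hl, hu⟩ := h
  simp only [bounds, hp, Encloses] at *
  have ha' : (0 : ℝ) < a := by exact_mod_cast ha
  have hb' : (0 : ℝ) < b := by exact_mod_cast hb
  have hc' : (0 : ℝ) < c := by exact_mod_cast hc
  have he' : (0 : ℝ) < e := by exact_mod_cast he
  have hx : 0 < x := lt_of_lt_of_le (by positivity) hl
  refine ⟨⟨he, by omega, hb, by omega⟩, ?_, ?_⟩
  · rw [le_div_iff₀ he'] at hu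
    push_cast
    rw [div_le_div_iff₀ (by positivity) (by positivity)]
    linarith
  · rw [div_le_iff₀ hb'] at hl
    push_cast
    rw [div_le_div_iff₀ (by positivity) (by positivity)]
    linarith

lemma pos_of_binary (hα : ∀ n, α n = 1 ∨ α n = 2) (n : ℤ) : 0 < α n := by
  have := hα n
  omega

lemma encloses_fwd (hα : ∀ n, α n = 1 ∨ α n = 2) {k : ℤ} {w : List ℕ} (h : ReadsR α k w) :
    Encloses (bounds w) (1 / fwd α k) := by
  induction w generalizing k with
  | nil => exact encloses_nil (one_le_fwd (pos_of_binary hα) k) (fwd_le_three hα k)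
  | cons d w ih =>
    rw [fwd_eq (pos_of_binary hα), h.1]
    exact encloses_cons (ih h.2)

lemma encloses_bwd (hα : ∀ n, α n = 1 ∨ α n = 2) {k : ℤ} {w : List ℕ} (h : ReadsL α k w) :
    Encloses (bounds w) (1 / bwd α k) := by
  have := encloses_fwd (α := fun n => α (-n)) (fun n => hα _) (k := 1 - k) (w := w)
    (readsR_neg.2 (by rwa [sub_sub_cancel]))
  rwa [fwd_neg, sub_sub_cancel] at this

/-- The enclosure of `λ_k` from the words read on either side certifies `q.1 / q.2 ≤ λ_k`. -/
def certGe (q : ℕ × ℕ) (L R : List ℕ) (d : ℕ) : Bool :=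
  match bounds L, bounds R with
  | ((a, b), _), ((c, e), _) => Nat.ble (q.1 * (b * e)) (q.2 * (d * (b * e) + a * e + c * b))

/-- The enclosure of `λ_k` from the words read on either side certifies `λ_k ≤ q.1 / q.2`. -/
def certLe (q : ℕ × ℕ) (L R : List ℕ) (d : ℕ) : Bool :=
  match bounds L, bounds R with
  | (_, (a, b)), (_, (c, e)) => Nat.ble (q.2 * (d * (b * e) + a * e + c * b)) (q.1 * (b * e))

lemma le_lambdaVal (hα : ∀ n, α n = 1 ∨ α n = 2) {q : ℕ × ℕ} (hq : 0 < q.2) {k : ℤ}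
    {L R : List ℕ} {d : ℕ} (hL : ReadsL α k L) (hR : ReadsR α k (d :: R))
    (h : certGe q L R d = true) : (q.1 : ℝ) / q.2 ≤ lambdaVal α k := by
  have h1 := encloses_bwd hα hL
  have h2 := encloses_fwd hα hR.2
  rw [lambdaVal_eq' (pos_of_binary hα), hR.1]
  rcases hp : bounds L with ⟨⟨a, b⟩, u⟩
  rcases hp' : bounds R with ⟨⟨c, e⟩, v⟩
  rw [certGe, hp, hp'] at h
  rw [hp] at h1
  rw [hp'] at h2
  obtain ⟨⟨-, hb, -, -⟩, hl, -⟩ := h1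
  obtain ⟨⟨-, he, -, -⟩, hl', -⟩ := h2
  simp only at hb he hl hl'
  have hb' : (0 : ℝ) < b := by exact_mod_cast hb
  have he' : (0 : ℝ) < e := by exact_mod_cast he
  have hq' : (0 : ℝ) < q.2 := by exact_mod_cast hq
  have h' : (q.1 : ℝ) * (b * e) ≤ q.2 * (d * (b * e) + a * e + c * b) := by
    exact_mod_cast Nat.le_of_ble_eq_true h
  have : (q.1 : ℝ) / q.2 ≤ d + c / e + a / b := by
    have e1 : (d : ℝ) + c / e + a / b = (d * (b * e) + a * e + c * b) / (b * e) := by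
      field_simp
      ring
    rw [e1, div_le_div_iff₀ hq' (by positivity)]
    linarith
  linarith

lemma lambdaVal_le (hα : ∀ n, α n = 1 ∨ α n = 2) {q : ℕ × ℕ} (hq : 0 < q.2) {k : ℤ}
    {L R : List ℕ} {d : ℕ} (hL : ReadsL α k L) (hR : ReadsR α k (d :: R))
    (h : certLe q L R d = true) : lambdaVal α k ≤ (q.1 : ℝ) / q.2 := by
  have h1 := encloses_bwd hα hL
  have h2 := encloses_fwd hα hR.2
  rw [lambdaVal_eq' (pos_of_binary hα), hR.1]
  rcases hp : bounds L with ⟨u, ⟨a, b⟩⟩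
  rcases hp' : bounds R with ⟨v, ⟨c, e⟩⟩
  rw [certLe, hp, hp'] at h
  rw [hp] at h1
  rw [hp'] at h2
  obtain ⟨⟨-, -, -, hb⟩, -, hl⟩ := h1
  obtain ⟨⟨-, -, -, he⟩, -, hl'⟩ := h2
  simp only at hb he hl hl'
  have hb' : (0 : ℝ) < b := by exact_mod_cast hb
  have he' : (0 : ℝ) < e := by exact_mod_cast he
  have hq' : (0 : ℝ) < q.2 := by exact_mod_cast hq
  have h' : (q.2 : ℝ) * (d * (b * e) + a * e + c * b) ≤ q.1 * (b * e) := by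
    exact_mod_cast Nat.le_of_ble_eq_true h
  have : (d : ℝ) + c / e + a / b ≤ (q.1 : ℝ) / q.2 := by
    have e1 : (d : ℝ) + c / e + a / b = (d * (b * e) + a * e + c * b) / (b * e) := by
      field_simp
      ring
    rw [e1, div_le_div_iff₀ (by positivity) hq']
    linarith
  linarith

/-- Some index of the window `(L, R)` at or right of its centre has `λ` at least `q`. -/
def scanR (q : ℕ × ℕ) : List ℕ → List ℕ → Bool
  | _, [] => false
  | L, d :: R => certGe q L R d || scanR q (d :: L) R

/-- Some index of the window `(L, R)` left of its centre has `λ` at least `q`. -/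
def scanL (q : ℕ × ℕ) : List ℕ → List ℕ → Bool
  | [], _ => false
  | d :: L, R => certGe q L R d || scanL q L (d :: R)

lemma exists_le_of_scanR (hα : ∀ n, α n = 1 ∨ α n = 2) {q : ℕ × ℕ} (hq : 0 < q.2) {k : ℤ}
    {L R : List ℕ} (hL : ReadsL α k L) (hR : ReadsR α k R) (h : scanR q L R = true) :
    ∃ j, (q.1 : ℝ) / q.2 ≤ lambdaVal α j := by
  induction R generalizing k L with
  | nil => simp [scanR] at h
  | cons d R ih =>
    rw [scanR, Bool.or_eq_true] at h
    rcases h with h | h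
    · exact ⟨k, le_lambdaVal hα hq hL hR h⟩
    · exact ih (k := k + 1) (L := d :: L) (by simpa [ReadsL] using ⟨hR.1, hL⟩) hR.2 h

lemma exists_le_of_scanL (hα : ∀ n, α n = 1 ∨ α n = 2) {q : ℕ × ℕ} (hq : 0 < q.2) {k : ℤ}
    {L R : List ℕ} (hL : ReadsL α k L) (hR : ReadsR α k R) (h : scanL q L R = true) :
    ∃ j, (q.1 : ℝ) / q.2 ≤ lambdaVal α j := by
  induction L generalizing k R with
  | nil => simp [scanL] at h
  | cons d L ih =>
    have hRd : ReadsR α (k - 1) (d :: R) := by simpa [ReadsR] using ⟨hL.1, hR⟩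
    rw [scanL, Bool.or_eq_true] at h
    rcases h with h | h
    · exact ⟨k - 1, le_lambdaVal hα hq hL.2 hRd h⟩
    · exact ih (k := k - 1) hL.2 hRd h

/-- The upper bound for `λ` at the centre of the window is at most `q`. -/
def centreLe (q : ℕ × ℕ) (L : List ℕ) : List ℕ → Bool
  | [] => false
  | d :: R => certLe q L R d

/-- Explore the extensions of the window `(L, R)`, alternating sides. A branch is closed when
some index has `λ ≥ q`, when `λ ≤ c` at the centre, or when the window extends one of `pats`. -/
def search (q c : ℕ × ℕ) (pats : List (List ℕ × List ℕ)) :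
    ℕ → Bool → List ℕ → List ℕ → Bool
  | 0, _, _, _ => false
  | n + 1, right, L, R =>
    scanR q L R || scanL q L R || centreLe c L R ||
      pats.any (fun p => p.1.isPrefixOf L && p.2.isPrefixOf R) ||
      match right with
      | true => search q c pats n false L (R ++ [1]) && search q c pats n false L (R ++ [2])
      | false => search q c pats n true (L ++ [1]) R && search q c pats n true (L ++ [2]) R

lemma exists_pattern_of_search (hα : ∀ n, α n = 1 ∨ α n = 2) {q c : ℕ × ℕ} (hq : 0 < q.2)
    (hc : 0 < c.2) (hqα : ∀ j, lambdaVal α j < (q.1 : ℝ) / q.2) {k : ℤ}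
    (hcα : (c.1 : ℝ) / c.2 < lambdaVal α k) {pats : List (List ℕ × List ℕ)} {n : ℕ}
    {right : Bool} {L R : List ℕ} (hL : ReadsL α k L) (hR : ReadsR α k R)
    (h : search q c pats n right L R = true) :
    ∃ p ∈ pats, ReadsL α k p.1 ∧ ReadsR α k p.2 := by
  induction n generalizing L R right with
  | zero => simp [search] at h
  | succ n ih =>
    simp only [search, Bool.or_eq_true] at h
    rcases h with (((h | h) | h) | h) | h
    · obtain ⟨j, hj⟩ := exists_le_of_scanR hα hq hL hR h
      exact absurd hj (hqα j).not_ge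
    · obtain ⟨j, hj⟩ := exists_le_of_scanL hα hq hL hR h
      exact absurd hj (hqα j).not_ge
    · cases R with
      | nil => simp [centreLe] at h
      | cons d R => exact absurd (lambdaVal_le hα hc hL hR h) hcα.not_ge
    · simp only [List.any_eq_true, Bool.and_eq_true, List.isPrefixOf_iff_prefix] at h
      obtain ⟨p, hp, ⟨L', rfl⟩, ⟨R', rfl⟩⟩ := h
      exact ⟨p, hp, (readsL_append.1 hL).1, (readsR_append.1 hR).1⟩
    · cases right with
      | true =>
        simp only [Bool.and_eq_true] at h
        rcases hα (k + R.length) with hd | hd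
        · exact ih (R := R ++ [1]) hL (readsR_append.2 ⟨hR, hd, trivial⟩) h.1
        · exact ih (R := R ++ [2]) hL (readsR_append.2 ⟨hR, hd, trivial⟩) h.2
      | false =>
        simp only [Bool.and_eq_true] at h
        rcases hα (k - L.length - 1) with hd | hd
        · exact ih (L := L ++ [1]) (readsL_append.2 ⟨hL, hd, trivial⟩) hR h.1
        · exact ih (L := L ++ [2]) (readsL_append.2 ⟨hL, hd, trivial⟩) hR h.2

end Search

section Moebius

/-- The finite continued fraction `[w, x]` with last entry `x`. -/
noncomputable def evalCF : List ℕ → ℝ → ℝ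
  | [], x => x
  | d :: w, x => d + 1 / evalCF w x

/-- The coefficients `(p, q, r, s)` with `[w, x] = (p x + q) / (r x + s)`. -/
def moebius : List ℕ → ℕ × ℕ × ℕ × ℕ
  | [] => (1, 0, 0, 1)
  | d :: w => match moebius w with
    | (p, q, r, s) => (d * p + r, d * q + s, p, q)

lemma evalCF_eq_moebius {w : List ℕ} {x : ℝ} (hx : 0 < x) {p q r s : ℕ}
    (h : moebius w = (p, q, r, s)) :
    0 < p * x + q ∧ 0 < r * x + s ∧ evalCF w x = (p * x + q) / (r * x + s) := by
  induction w generalizing p q r s with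
  | nil =>
    simp only [moebius, Prod.mk.injEq] at h
    obtain ⟨rfl, rfl, rfl, rfl⟩ := h
    simpa [evalCF] using hx
  | cons d w ih =>
    rcases hm : moebius w with ⟨p', q', r', s'⟩
    obtain ⟨h1, h2, h3⟩ := ih hm
    simp only [moebius, hm, Prod.mk.injEq] at h
    obtain ⟨rfl, rfl, rfl, rfl⟩ := h
    push_cast
    refine ⟨by nlinarith [mul_nonneg d.cast_nonneg h1.le], h1, ?_⟩
    rw [evalCF, h3]
    field_simp
    ring

variable {α : ℤ → ℕ}

lemma fwd_eq_evalCF (hα : ∀ n, 0 < α n) {k : ℤ} {w : List ℕ} (h : ReadsR α k w) :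
    fwd α k = evalCF w (fwd α (k + w.length)) := by
  induction w generalizing k with
  | nil => simp [evalCF]
  | cons d w ih =>
    have e : k + ((d :: w).length : ℕ) = k + 1 + w.length := by simp; ring
    rw [fwd_eq hα, evalCF, ih h.2, h.1, e]

lemma bwd_eq_evalCF (hα : ∀ n, 0 < α n) {k : ℤ} {w : List ℕ} (h : ReadsL α k w) :
    bwd α k = evalCF w (bwd α (k - w.length)) := by
  have := fwd_eq_evalCF (α := fun n => α (-n)) (fun n => hα _) (k := 1 - k) (w := w)
    (readsR_neg.2 (by rwa [sub_sub_cancel]))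
  rwa [fwd_neg, fwd_neg, ← sub_sub, sub_sub_cancel] at this

end Moebius

section Windows

variable {α : ℤ → ℕ}

/-- The `n` digits of `α` to the right, starting at index `k`. -/
def windowR (α : ℤ → ℕ) : ℤ → ℕ → List ℕ
  | _, 0 => []
  | k, n + 1 => α k :: windowR α (k + 1) n

/-- The `n` digits of `α` to the left, starting at index `k - 1`. -/
def windowL (α : ℤ → ℕ) : ℤ → ℕ → List ℕ
  | _, 0 => []
  | k, n + 1 => α (k - 1) :: windowL α (k - 1) n

lemma readsR_windowR (α : ℤ → ℕ) (k : ℤ) (n : ℕ) : ReadsR α k (windowR α k n) := by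
  induction n generalizing k with
  | zero => trivial
  | succ n ih => exact ⟨rfl, ih _⟩

lemma readsL_windowL (α : ℤ → ℕ) (k : ℤ) (n : ℕ) : ReadsL α k (windowL α k n) := by
  induction n generalizing k with
  | zero => trivial
  | succ n ih => exact ⟨rfl, ih _⟩

/-- The window of radius `n` around `k` certifies `λ_k ≤ q`. -/
def windowLe (q : ℕ × ℕ) (α : ℤ → ℕ) (n : ℕ) (k : ℤ) : Bool :=
  certLe q (windowL α k n) (windowR α (k + 1) n) (α k)

lemma lambdaVal_le_of_windowLe (hα : ∀ n, α n = 1 ∨ α n = 2) {q : ℕ × ℕ} (hq : 0 < q.2)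
    {n : ℕ} {k : ℤ} (h : windowLe q α n k = true) : lambdaVal α k ≤ (q.1 : ℝ) / q.2 :=
  lambdaVal_le hα hq (readsL_windowL α k n) ⟨rfl, readsR_windowR α (k + 1) n⟩ h

lemma windowR_congr {β : ℤ → ℕ} {j k : ℤ} {n : ℕ} (h : ∀ i : ℕ, i < n → α (j + i) = β (k + i)) :
    windowR α j n = windowR β k n := by
  induction n generalizing j k with
  | zero => rfl
  | succ n ih =>
    rw [windowR, windowR, ih (j := j + 1) (k := k + 1)]
    · simpa using h 0 (by omega)
    · intro i hi
      have := h (i + 1) (by omega)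
      push_cast at this
      convert this using 2 <;> ring

lemma windowL_congr {β : ℤ → ℕ} {j k : ℤ} {n : ℕ}
    (h : ∀ i : ℕ, i < n → α (j - 1 - i) = β (k - 1 - i)) : windowL α j n = windowL β k n := by
  induction n generalizing j k with
  | zero => rfl
  | succ n ih =>
    rw [windowL, windowL, ih (j := j - 1) (k := k - 1)]
    · simpa using h 0 (by omega)
    · intro i hi
      have := h (i + 1) (by omega)
      push_cast at this
      convert this using 2 <;> ring

lemma windowLe_congr {β : ℤ → ℕ} {q : ℕ × ℕ} {j k : ℤ} {n : ℕ}
    (h : ∀ i : ℤ, -n ≤ i → i ≤ n → α (j + i) = β (k + i)) :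
    windowLe q α n j = windowLe q β n k := by
  rw [windowLe, windowLe, windowL_congr (β := β) (k := k), windowR_congr (β := β) (k := k + 1)]
  · congr 1
    simpa using h 0 (by omega) (by omega)
  · intro i hi
    convert h (1 + i) (by omega) (by omega) using 2 <;> ring
  · intro i hi
    convert h (-1 - i) (by omega) (by omega) using 2 <;> ring

end Windows

section LowerEndpoint

/-- The sequence of period `1, 1, 2, 2, 2, 1, 1, 2, 2, 1, 1, 1, 2, 2`. -/
def seqLo (n : ℤ) : ℕ := [1, 1, 2, 2, 2, 1, 1, 2, 2, 1, 1, 1, 2, 2].getD (n % 14).toNat 1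

lemma seqLo_eq_of_emod {m n : ℤ} (h : m % 14 = n % 14) : seqLo m = seqLo n := by
  rw [seqLo, seqLo, h]

lemma exists_emod_eq (n : ℤ) {m : ℕ} (hm : 0 < m) : ∃ r : Fin m, n % m = ((r : ℕ) : ℤ) % m := by
  refine ⟨⟨(n % m).toNat, ?_⟩, ?_⟩
  · have := Int.emod_lt_of_pos n (show (0 : ℤ) < m by exact_mod_cast hm)
    omega
  · simp only
    rw [Int.toNat_of_nonneg (Int.emod_nonneg _ (by omega)), Int.emod_emod]

lemma seqLo_binary (n : ℤ) : seqLo n = 1 ∨ seqLo n = 2 := by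
  obtain ⟨r, hr⟩ := exists_emod_eq n (m := 14) (by norm_num)
  rw [seqLo_eq_of_emod hr]
  clear hr
  revert r
  decide

lemma seqLo_neg (n : ℤ) : seqLo (-n) = seqLo (n + 6) := by
  obtain ⟨r, hr⟩ := exists_emod_eq n (m := 14) (by norm_num)
  rw [seqLo_eq_of_emod (show (-n) % 14 = (-(r : ℕ) : ℤ) % 14 by omega),
    seqLo_eq_of_emod (show (n + 6) % 14 = ((r : ℕ) + 6 : ℤ) % 14 by omega)]
  clear hr
  revert r
  decide

lemma seqLo_shift {c : ℤ} (hc : c % 14 = 0) : (fun n => seqLo (n + c)) = seqLo :=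
  funext fun n => seqLo_eq_of_emod (by omega)

/-- The value of the purely periodic continued fraction with the digits of `seqLo`. -/
noncomputable def tailLo : ℝ := fwd seqLo 0

lemma one_le_tailLo : 1 ≤ tailLo := one_le_fwd (pos_of_binary seqLo_binary) 0

lemma fwd_seqLo_of_emod {k : ℤ} (hk : k % 14 = 0) : fwd seqLo k = tailLo := by
  have h := fwd_shift seqLo k 0
  rwa [seqLo_shift hk, zero_add, eq_comm] at h

lemma tailLo_quadratic : 6079 * tailLo ^ 2 - 7826 * tailLo - 4361 = 0 := by
  have h1 := one_le_tailLo
  have h := fwd_eq_evalCF (pos_of_binary seqLo_binary) (k := 0)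
    (w := [1, 1, 2, 2, 2, 1, 1, 2, 2, 1, 1, 1, 2, 2]) (readsR_windowR seqLo 0 14)
  rw [fwd_seqLo_of_emod rfl, fwd_seqLo_of_emod (by simp), (evalCF_eq_moebius (p := 10380)
    (q := 4361) (r := 6079) (s := 2554) (by linarith) rfl).2.2, eq_div_iff (by positivity)] at h
  push_cast at h
  linear_combination h

lemma tailLo_eq : 6079 * tailLo = 3913 + 14 * √213378 := by
  have hs : √213378 ^ 2 = 213378 := Real.sq_sqrt (by norm_num)
  have h : (6079 * tailLo - 3913) ^ 2 = (14 * √213378) ^ 2 := by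
    linear_combination 6079 * tailLo_quadratic - 196 * hs
  rw [sq_eq_sq₀ (by linarith [one_le_tailLo]) (by positivity)] at h
  linarith

lemma eval_tailLo_add_inv_eval :
    evalCF [2, 2] tailLo + 1 / evalCF [1, 1, 1, 2, 2] tailLo = 28 * √213378 / 4287 := by
  have h1 := one_le_tailLo
  rw [(evalCF_eq_moebius (p := 5) (q := 2) (r := 2) (s := 1) (by linarith) rfl).2.2,
    (evalCF_eq_moebius (p := 19) (q := 8) (r := 12) (s := 5) (by linarith) rfl).2.2, one_div_div,
    div_add_div _ _ (by positivity) (by positivity), div_eq_iff (by positivity),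
    show √213378 = (6079 * tailLo - 3913) / 14 by linarith [tailLo_eq]]
  push_cast
  linear_combination (-(76 * tailLo + 35) / 4287) * tailLo_quadratic

lemma bwd_seqLo (k : ℤ) : bwd seqLo k = fwd seqLo (7 - k) := by
  have h := fwd_neg seqLo (1 - k)
  simp only [seqLo_neg] at h
  rw [fwd_shift, sub_sub_cancel] at h
  rw [← h]
  congr 1
  ring

lemma lambdaVal_seqLo_twelve : lambdaVal seqLo 12 = 28 * √213378 / 4287 := by
  have hf : fwd seqLo (12 + ([2, 2] : List ℕ).length) = tailLo :=
    fwd_seqLo_of_emod (by simp)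
  have hb : bwd seqLo (12 - ([1, 1, 1, 2, 2] : List ℕ).length) = tailLo := by
    rw [bwd_seqLo, tailLo]
    simp
  rw [lambdaVal_eq (pos_of_binary seqLo_binary),
    fwd_eq_evalCF (pos_of_binary seqLo_binary) (readsR_windowR seqLo 12 2),
    bwd_eq_evalCF (pos_of_binary seqLo_binary) (readsL_windowL seqLo 12 5),
    ← eval_tailLo_add_inv_eval]
  exact congrArg₂ (fun x y => evalCF [2, 2] x + 1 / evalCF [1, 1, 1, 2, 2] y) hf hb

lemma lambdaVal_seqLo_le (k : ℤ) : lambdaVal seqLo k ≤ 28 * √213378 / 4287 := by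
  have hpos := pos_of_binary seqLo_binary
  have hper {j k : ℤ} (h : j % 14 = k % 14) : lambdaVal seqLo j = lambdaVal seqLo k := by
    have := lambdaVal_shift hpos (j - k) k
    rwa [seqLo_shift (by omega), add_sub_cancel, eq_comm] at this
  have hs : (461.9 : ℝ) < √213378 := Real.lt_sqrt_of_sq_lt (by norm_num)
  obtain ⟨r, hr⟩ := exists_emod_eq k (m := 14) (by norm_num)
  have hw : ∀ r : Fin 14, windowLe (3015, 1000) seqLo 8 (r : ℕ) = true ∨ r = 8 ∨ r = 12 := by
    decide +kernel
  rw [hper hr]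
  rcases hw r with h | rfl | rfl
  · refine (lambdaVal_le_of_windowLe seqLo_binary (by norm_num) h).trans ?_
    norm_num
    linarith
  · have h := lambdaVal_neg hpos (α := seqLo) 2
    simp only [seqLo_neg] at h
    rw [lambdaVal_shift hpos, hper (show (-2) % 14 = 12 % 14 by norm_num)] at h
    exact (h.trans lambdaVal_seqLo_twelve).le
  · exact lambdaVal_seqLo_twelve.le

end LowerEndpoint

section Maximum

lemma markovValue_eq {α : ℤ → ℕ} {k : ℤ} (h : ∀ j, lambdaVal α j ≤ lambdaVal α k) :
    markovValue α = lambdaVal α k :=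
  le_antisymm (ciSup_le h) (le_ciSup ⟨_, forall_mem_range.2 h⟩ k)

lemma lambdaVal_mem_markovSpectrum {α : ℤ → ℕ} (hα : ∀ n, 0 < α n) {k : ℤ}
    (h : ∀ j, lambdaVal α j ≤ lambdaVal α k) : lambdaVal α k ∈ markovSpectrum :=
  ⟨α, hα, ⟨_, forall_mem_range.2 h⟩, markovValue_eq h⟩

end Maximum

section IsolatedPoint

/-- The sequence of period `2, 2, 2, 2, 1, 1, 1, 1`. -/
def seqMid (n : ℤ) : ℕ := [2, 2, 2, 2, 1, 1, 1, 1].getD (n % 8).toNat 1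

lemma seqMid_eq_of_emod {m n : ℤ} (h : m % 8 = n % 8) : seqMid m = seqMid n := by
  rw [seqMid, seqMid, h]

lemma seqMid_binary (n : ℤ) : seqMid n = 1 ∨ seqMid n = 2 := by
  obtain ⟨r, hr⟩ := exists_emod_eq n (m := 8) (by norm_num)
  rw [seqMid_eq_of_emod hr]
  clear hr
  revert r
  decide

lemma seqMid_neg (n : ℤ) : seqMid (-n) = seqMid (n + 3) := by
  obtain ⟨r, hr⟩ := exists_emod_eq n (m := 8) (by norm_num)
  rw [seqMid_eq_of_emod (show (-n) % 8 = (-(r : ℕ) : ℤ) % 8 by omega),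
    seqMid_eq_of_emod (show (n + 3) % 8 = ((r : ℕ) + 3 : ℤ) % 8 by omega)]
  clear hr
  revert r
  decide

lemma seqMid_shift {c : ℤ} (hc : c % 8 = 0) : (fun n => seqMid (n + c)) = seqMid :=
  funext fun n => seqMid_eq_of_emod (by omega)

lemma fwd_seqMid_zero : fwd seqMid 0 = (9 + √229) / 10 := by
  have h1 := one_le_fwd (pos_of_binary seqMid_binary) 0
  have h := fwd_eq_evalCF (pos_of_binary seqMid_binary) (k := 0)
    (w := [2, 2, 2, 2, 1, 1, 1, 1]) (readsR_windowR seqMid 0 8)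
  rw [← fwd_shift, seqMid_shift (by simp), (evalCF_eq_moebius (p := 181)
    (q := 111) (r := 75) (s := 46) (by linarith) rfl).2.2, eq_div_iff (by positivity)] at h
  push_cast at h
  have hs : √229 ^ 2 = 229 := Real.sq_sqrt (by norm_num)
  have h' : (10 * fwd seqMid 0 - 9) ^ 2 = √229 ^ 2 := by
    linear_combination 4 / 3 * h - hs
  rw [sq_eq_sq₀ (by linarith) (by positivity)] at h'
  linarith

lemma bwd_seqMid_zero : bwd seqMid 0 = (45 + 5 * √229) / 74 := by
  have h1 := one_le_bwd (pos_of_binary seqMid_binary) 0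
  have h := bwd_eq_evalCF (pos_of_binary seqMid_binary) (k := 0)
    (w := [1, 1, 1, 1, 2, 2, 2, 2]) (readsL_windowL seqMid 0 8)
  rw [sub_eq_add_neg, ← bwd_shift, seqMid_shift (by simp), (evalCF_eq_moebius (p := 181)
    (q := 75) (r := 111) (s := 46) (by linarith) rfl).2.2, eq_div_iff (by positivity)] at h
  push_cast at h
  have hs : √229 ^ 2 = 229 := Real.sq_sqrt (by norm_num)
  have h' : (74 * bwd seqMid 0 - 45) ^ 2 = (5 * √229) ^ 2 := by
    linear_combination 148 / 3 * h - 25 * hs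
  rw [sq_eq_sq₀ (by linarith) (by positivity)] at h'
  linarith

lemma lambdaVal_seqMid_zero : lambdaVal seqMid 0 = √229 / 5 := by
  have hs : √229 ^ 2 = 229 := Real.sq_sqrt (by norm_num)
  rw [lambdaVal_eq (pos_of_binary seqMid_binary), fwd_seqMid_zero, bwd_seqMid_zero]
  field_simp
  linear_combination -25 * hs

lemma lambdaVal_seqMid_le (k : ℤ) : lambdaVal seqMid k ≤ √229 / 5 := by
  have hpos := pos_of_binary seqMid_binary
  have hper {j k : ℤ} (h : j % 8 = k % 8) : lambdaVal seqMid j = lambdaVal seqMid k := by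
    have := lambdaVal_shift hpos (j - k) k
    rwa [seqMid_shift (by omega), add_sub_cancel, eq_comm] at this
  have hs : (15.1 : ℝ) < √229 := Real.lt_sqrt_of_sq_lt (by norm_num)
  obtain ⟨r, hr⟩ := exists_emod_eq k (m := 8) (by norm_num)
  have hw : ∀ r : Fin 8, windowLe (302, 100) seqMid 8 (r : ℕ) = true ∨ r = 0 ∨ r = 3 := by
    decide +kernel
  rw [hper hr]
  rcases hw r with h | rfl | rfl
  · refine (lambdaVal_le_of_windowLe seqMid_binary (by norm_num) h).trans ?_
    norm_num
    linarith
  · exact lambdaVal_seqMid_zero.le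
  · have h := lambdaVal_neg hpos (α := seqMid) 0
    simp only [seqMid_neg] at h
    rw [lambdaVal_shift hpos, neg_zero] at h
    exact (h.trans lambdaVal_seqMid_zero).le

end IsolatedPoint

section UpperEndpoint

/-- The right half of `seqHi`. -/
def halfHi (m : ℤ) : ℕ :=
  if m < 15 then [1, 1, 2, 2, 2, 2, 1, 1, 2, 2, 1, 1, 1, 2, 2].getD m.toNat 1 else seqLo (m - 15)

/-- The sequence symmetric about `-1/2` whose right half starts with
`1, 1, 2, 2, 2, 2, 1, 1, 2, 2, 1, 1, 1, 2, 2` and continues as `seqLo`. -/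
def seqHi (n : ℤ) : ℕ := if 0 ≤ n then halfHi n else halfHi (-1 - n)

lemma seqHi_neg (n : ℤ) : seqHi (-n) = seqHi (n - 1) := by
  unfold seqHi
  split_ifs with h1 h2 h2
  · obtain rfl : n = 0 := by omega
    omega
  all_goals first | omega | (congr 1; ring)

lemma seqHi_eq_seqLo {n : ℤ} (hn : 15 ≤ n) : seqHi n = seqLo (n - 15) := by
  rw [seqHi, if_pos (by omega), halfHi, if_neg (by omega)]

lemma seqHi_binary (n : ℤ) : seqHi n = 1 ∨ seqHi n = 2 := by
  wlog hn : 0 ≤ n generalizing n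
  · have := this (-n - 1) (by omega)
    rwa [← seqHi_neg, neg_neg] at this
  rcases le_or_gt 15 n with h | h
  · rw [seqHi_eq_seqLo h]
    exact seqLo_binary _
  · interval_cases n <;> decide

lemma seqHi_congr {k : ℤ} (hk : 15 ≤ k) (i : ℕ) : seqHi (k + i) = seqLo (k - 15 + i) := by
  rw [seqHi_eq_seqLo (by omega)]
  congr 1
  ring

lemma fwd_seqHi {k : ℤ} (hk : 15 ≤ k) : fwd seqHi k = fwd seqLo (k - 15) := by
  simp only [fwd, seqHi_congr hk]

lemma eval_tailLo_add_inv_eval_long :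
    evalCF [2, 2, 2, 2, 1, 1, 2, 2, 1, 1, 1, 2, 2] tailLo +
      1 / evalCF [1, 1, 1, 1, 2, 2, 2, 2, 1, 1, 2, 2, 1, 1, 1, 2, 2] tailLo =
        (2497149255 + 2842763 * √213378) / 1258910718 := by
  have h1 := one_le_tailLo
  rw [(evalCF_eq_moebius (p := 10380) (q := 4361) (r := 4301) (s := 1807) (by linarith) rfl).2.2,
    (evalCF_eq_moebius (p := 64803) (q := 27226) (r := 39742) (s := 16697)
      (by linarith) rfl).2.2, one_div_div,
    div_add_div _ _ (by positivity) (by positivity), div_eq_iff (by positivity),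
    show √213378 = (6079 * tailLo - 3913) / 14 by linarith [tailLo_eq]]
  push_cast
  linear_combination (-37729922549209/839273812 * tailLo - 1829037245399/96839286) * tailLo_quadratic

lemma lambdaVal_seqHi_two :
    lambdaVal seqHi 2 = (2497149255 + 2842763 * √213378) / 1258910718 := by
  have hpos := pos_of_binary seqHi_binary
  have hf : fwd seqHi 15 = tailLo := by
    rw [fwd_seqHi le_rfl]
    rfl
  have hb : bwd seqHi (-15) = tailLo := by
    rw [← hf]
    have h := fwd_neg seqHi 16
    simp only [seqHi_neg, sub_eq_add_neg _ (1 : ℤ)] at h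
    rw [fwd_shift] at h
    exact h.symm
  rw [lambdaVal_eq hpos, fwd_eq_evalCF hpos (readsR_windowR seqHi 2 13),
    bwd_eq_evalCF hpos (readsL_windowL seqHi 2 17), ← eval_tailLo_add_inv_eval_long]
  exact congrArg₂ (fun x y => evalCF [2, 2, 2, 2, 1, 1, 2, 2, 1, 1, 1, 2, 2] x +
    1 / evalCF [1, 1, 1, 1, 2, 2, 2, 2, 1, 1, 2, 2, 1, 1, 1, 2, 2] y) hf hb

lemma lambdaVal_seqHi_le (k : ℤ) :
    lambdaVal seqHi k ≤ (2497149255 + 2842763 * √213378) / 1258910718 := by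
  have hpos := pos_of_binary seqHi_binary
  have hs : (461.928 : ℝ) < √213378 := Real.lt_sqrt_of_sq_lt (by norm_num)
  wlog hk : 0 ≤ k generalizing k
  · have h := lambdaVal_neg hpos (α := seqHi) (-k)
    simp only [seqHi_neg, sub_eq_add_neg _ (1 : ℤ)] at h
    rw [lambdaVal_shift hpos, neg_neg] at h
    rw [← h]
    exact this _ (by omega)
  rcases eq_or_ne k 2 with rfl | h2
  · exact lambdaVal_seqHi_two.le
  have hw : windowLe (302665, 100000) seqHi 8 k = true := by
    rcases lt_or_ge k 23 with hk' | hk'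
    · lift k to ℕ using hk
      have hw : ∀ r : Fin 23, r ≠ 2 → windowLe (302665, 100000) seqHi 8 (r : ℕ) = true := by
        decide +kernel
      exact hw ⟨k, by omega⟩ (by simp [Fin.ext_iff]; omega)
    · obtain ⟨r, hr⟩ := exists_emod_eq (k - 15) (m := 14) (by norm_num)
      have hw : ∀ r : Fin 14, windowLe (302665, 100000) seqLo 8 (r : ℕ) = true := by
        decide +kernel
      rw [windowLe_congr (β := seqLo) (k := ((r : ℕ) : ℤ)), hw]
      intro i hi _
      rw [seqHi_eq_seqLo (by omega)]
      exact seqLo_eq_of_emod (by omega)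
  refine (lambdaVal_le_of_windowLe seqHi_binary (by norm_num) hw).trans ?_
  norm_num
  linarith

end UpperEndpoint

section Allowed

/-- Sequences of digits `1` and `2` whose `λ` values stay below the upper end of the gap. -/
def Allowed (α : ℤ → ℕ) : Prop :=
  (∀ n, α n = 1 ∨ α n = 2) ∧
    ∀ k, lambdaVal α k < (2497149255 + 2842763 * √213378) / 1258910718

/-- A rational number slightly above the upper end of the gap. -/
def hiApprox : ℕ × ℕ := (30266663366, 10000000000)

lemma sqrt_lt : √213378 < 461.92856595 := by
  rw [Real.sqrt_lt' (by norm_num)]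
  norm_num

variable {α : ℤ → ℕ}

lemma Allowed.neg (h : Allowed α) : Allowed fun n => α (-n) :=
  ⟨fun _ => h.1 _, fun k => by
    rw [lambdaVal_neg (pos_of_binary h.1)]
    exact h.2 _⟩

lemma Allowed.lt_hiApprox (h : Allowed α) (k : ℤ) :
    lambdaVal α k < (hiApprox.1 : ℝ) / hiApprox.2 := by
  refine (h.2 k).trans ?_
  norm_num [hiApprox]
  linarith [sqrt_lt]

lemma Allowed.exists_pattern (h : Allowed α) {k : ℤ} {pats : List (List ℕ × List ℕ)}
    {n : ℕ} {L R : List ℕ} (hL : ReadsL α k L) (hR : ReadsR α k R)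
    (hs : search hiApprox (0, 1) pats n true L R = true) :
    ∃ p ∈ pats, ReadsL α k p.1 ∧ ReadsR α k p.2 := by
  refine exists_pattern_of_search h.1 (by norm_num [hiApprox]) (by norm_num) h.lt_hiApprox ?_
    hL hR hs
  have h1 := one_le_fwd (pos_of_binary h.1) k
  have h2 := one_le_bwd (pos_of_binary h.1) k
  rw [lambdaVal_eq (pos_of_binary h.1)]
  norm_num
  positivity

lemma Allowed.not_reads (h : Allowed α) {k : ℤ} {n : ℕ} {L R : List ℕ} (hL : ReadsL α k L)
    (hR : ReadsR α k R) (hs : search hiApprox (0, 1) [] n true L R = true) : False := by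
  simpa using h.exists_pattern hL hR hs

lemma Allowed.fwd_le_tailLo (h : Allowed α) {p : ℤ} (hp : α p = 1) : fwd α p ≤ tailLo := by
  refine cfVal_le (s := fun n => α (p + n)) (t := fun n => seqLo (0 + n))
    (fun _ => pos_of_binary h.1 _) (fun _ => pos_of_binary seqLo_binary _) fun n hn => ?_
  obtain ⟨r, hr⟩ := exists_emod_eq n (m := 14) (by norm_num)
  have hrn : (n : ℤ) = n / 14 * 14 + (r : ℕ) := by omega
  have hbad : ∀ r : Fin 14,
      ((r : ℕ) % 2 = 0 → seqLo (r : ℕ) = 1 → search hiApprox (0, 1) [] 14 true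
        (windowL seqLo (r : ℕ) (if r = 0 then 14 else r)) [2] = true) ∧
      ((r : ℕ) % 2 = 1 → seqLo (r : ℕ) = 2 → search hiApprox (0, 1) [] 14 true
        (windowL seqLo (r : ℕ) (if r = 0 then 14 else r)) [1] = true) := by
    decide +kernel
  rcases eq_or_ne n 0 with rfl | hn0
  · simp [hp, seqLo]
  have hL : ReadsL α (p + n) (windowL seqLo (r : ℕ) (if r = 0 then 14 else r)) := by
    rw [← windowL_congr (α := α) (j := p + n)]
    · exact readsL_windowL _ _ _
    · intro i hi
      have hin : i < n := by
        split_ifs at hi with h0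
        · subst h0
          have : ((0 : Fin 14) : ℕ) = 0 := rfl
          omega
        · omega
      have := hn (n - 1 - i) (by omega)
      rw [show p + n - 1 - i = p + (n - 1 - i : ℕ) by omega, this]
      exact seqLo_eq_of_emod (by omega)
  have ht : seqLo (0 + n) = seqLo (r : ℕ) := seqLo_eq_of_emod (by omega)
  simp only [ht]
  have h1 := h.1 (p + n)
  have h2 := seqLo_binary (r : ℕ)
  constructor <;> intro hpar <;> by_contra hlt
  · rw [Nat.even_iff] at hpar
    exact h.not_reads hL (R := [2]) ⟨by omega, trivial⟩ ((hbad r).1 (by omega) (by omega))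
  · rw [Nat.odd_iff] at hpar
    exact h.not_reads hL (R := [1]) ⟨by omega, trivial⟩ ((hbad r).2 (by omega) (by omega))

lemma Allowed.bwd_le_tailLo (h : Allowed α) {p : ℤ} (hp : α (p - 1) = 1) :
    bwd α p ≤ tailLo := by
  have := h.neg.fwd_le_tailLo (p := 1 - p) (by simpa using hp)
  rwa [fwd_neg, sub_sub_cancel] at this

end Allowed

section Patterns

variable {α : ℤ → ℕ}

lemma Allowed.lambdaVal_le_of_reads (h : Allowed α) {k : ℤ} (hL : ReadsL α k [1, 1, 1, 2, 2, 1])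
    (hR : ReadsR α k [2, 2, 1, 1]) : lambdaVal α k ≤ 28 * √213378 / 4287 := by
  have hpos := pos_of_binary h.1
  replace hL := readsL_append (v := [1, 1, 1, 2, 2]) (w := [1]).1 hL
  replace hR := readsR_append (v := [2, 2]) (w := [1, 1]).1 hR
  have hx := h.fwd_le_tailLo hR.2.1
  have hy := h.bwd_le_tailLo hL.2.1
  have hx1 := one_le_fwd hpos (k + ([2, 2] : List ℕ).length)
  have hy1 := one_le_bwd hpos (k - ([1, 1, 1, 2, 2] : List ℕ).length)
  have h1 := one_le_tailLo
  rw [lambdaVal_eq hpos, fwd_eq_evalCF hpos hR.1, bwd_eq_evalCF hpos hL.1,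
    ← eval_tailLo_add_inv_eval]
  simp only [evalCF]
  gcongr

/-- The palindromic word around `2222 1111 2222`, read from one of its two indices with large `λ`,
is excluded when the tail on the left is at least as large as the tail on the right. -/
lemma Allowed.not_reads_long_of_le (h : Allowed α) {k : ℤ}
    (hL : ReadsL α k [1, 1, 1, 1, 2, 2, 2, 2, 1, 1, 2, 2, 1, 1, 1, 2, 2, 1, 1])
    (hR : ReadsR α k [2, 2, 2, 2, 1, 1, 2, 2, 1, 1, 1, 2, 2, 1, 1])
    (hle : fwd α (k + 13) ≤ bwd α (k - 17)) : False := by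
  have hpos := pos_of_binary h.1
  replace hL := readsL_append (v := [1, 1, 1, 1, 2, 2, 2, 2, 1, 1, 2, 2, 1, 1, 1, 2, 2])
    (w := [1, 1]).1 hL
  replace hR := readsR_append (v := [2, 2, 2, 2, 1, 1, 2, 2, 1, 1, 1, 2, 2]) (w := [1, 1]).1 hR
  have hx : fwd α (k + 13) ≤ tailLo := h.fwd_le_tailLo hR.2.1
  have hx1 := one_le_fwd hpos (k + 13)
  have hy1 := one_le_bwd hpos (k - 17)
  have h1 := one_le_tailLo
  have e1 : fwd α k = evalCF [2, 2, 2, 2, 1, 1, 2, 2, 1, 1, 1, 2, 2] (fwd α (k + 13)) :=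
    fwd_eq_evalCF hpos hR.1
  have e2 : bwd α k =
      evalCF [1, 1, 1, 1, 2, 2, 2, 2, 1, 1, 2, 2, 1, 1, 1, 2, 2] (bwd α (k - 17)) :=
    bwd_eq_evalCF hpos hL.1
  refine (h.2 k).not_ge ?_
  rw [lambdaVal_eq hpos, e1, e2, ← eval_tailLo_add_inv_eval_long]
  generalize fwd α (k + 13) = x at *
  generalize bwd α (k - 17) = y at *
  have hmono : 1 / evalCF [1, 1, 1, 1, 2, 2, 2, 2, 1, 1, 2, 2, 1, 1, 1, 2, 2] x ≤
      1 / evalCF [1, 1, 1, 1, 2, 2, 2, 2, 1, 1, 2, 2, 1, 1, 1, 2, 2] y := by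
    simp only [evalCF]
    gcongr
  have hF {z : ℝ} (hz : 1 ≤ z) := (evalCF_eq_moebius (x := z)
    (w := [2, 2, 2, 2, 1, 1, 2, 2, 1, 1, 1, 2, 2]) (p := 10380) (q := 4361) (r := 4301)
    (s := 1807) (by linarith) rfl).2.2
  have hG {z : ℝ} (hz : 1 ≤ z) := (evalCF_eq_moebius (x := z)
    (w := [1, 1, 1, 1, 2, 2, 2, 2, 1, 1, 2, 2, 1, 1, 1, 2, 2]) (p := 64803) (q := 27226)
    (r := 39742) (s := 16697) (by linarith) rfl).2.2
  refine le_trans ?_ (add_le_add_right hmono _)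
  rw [hF hx1, hF h1, hG hx1, hG h1, one_div_div, one_div_div]
  push_cast
  have d1 : (10380 * x + 4361) / (4301 * x + 1807) -
      (10380 * tailLo + 4361) / (4301 * tailLo + 1807) =
        (tailLo - x) / ((4301 * x + 1807) * (4301 * tailLo + 1807)) := by
    field_simp
    ring
  have d2 : (39742 * tailLo + 16697) / (64803 * tailLo + 27226) -
      (39742 * x + 16697) / (64803 * x + 27226) =
        (tailLo - x) / ((64803 * x + 27226) * (64803 * tailLo + 27226)) := by
    field_simp
    ring
  have hd : (tailLo - x) / ((64803 * x + 27226) * (64803 * tailLo + 27226)) ≤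
      (tailLo - x) / ((4301 * x + 1807) * (4301 * tailLo + 1807)) := by
    have := sub_nonneg.2 hx
    gcongr <;> linarith
  linarith

lemma Allowed.not_reads_long (h : Allowed α) {k : ℤ}
    (hL : ReadsL α k [1, 1, 1, 1, 2, 2, 2, 2, 1, 1, 2, 2, 1, 1, 1, 2, 2, 1, 1])
    (hR : ReadsR α k [2, 2, 2, 2, 1, 1, 2, 2, 1, 1, 1, 2, 2, 1, 1]) : False := by
  rcases le_total (fwd α (k + 13)) (bwd α (k - 17)) with hle | hle
  · exact h.not_reads_long_of_le hL hR hle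
  · have hm := reads_move_left [1, 1, 1, 1] hL hR
    rw [show k - (([1, 1, 1, 1] : List ℕ).length : ℤ) = 1 - (5 - k) by simp; ring] at hm
    refine h.neg.not_reads_long_of_le (k := 5 - k) (readsL_neg.2 hm.2) (readsR_neg.2 hm.1) ?_
    rwa [fwd_neg, bwd_neg, show 1 - (5 - k + 13) = k - 17 by ring,
      show 1 - (5 - k - 17) = k + 13 by ring]

lemma readsR_getD {k : ℤ} {w : List ℕ} (h : ReadsR α k w) {i : ℕ} (hi : i < w.length) :
    α (k + i) = w.getD i 1 := by
  induction w generalizing k i with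
  | nil => simp at hi
  | cons d w ih =>
    cases i with
    | zero => simpa using h.1
    | succ i =>
      have := ih h.2 (i := i) (by simpa using hi)
      rw [List.getD_cons_succ, ← this]
      congr 1
      push_cast
      ring

/-- The word `1111 2222 . 2222 1111` is read around the index `k`. -/
def ReadsMid (α : ℤ → ℕ) (k : ℤ) : Prop :=
  ReadsL α k [1, 1, 1, 1, 2, 2, 2, 2] ∧ ReadsR α k [2, 2, 2, 2, 1, 1, 1, 1]

lemma Allowed.readsMid_add (h : Allowed α) {k : ℤ} (hk : ReadsMid α k) :
    ReadsMid α (k + 8) := by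
  obtain ⟨p, hp, -, hR⟩ := h.exists_pattern (n := 26)
    (pats := [([], [2, 2, 2, 2, 1, 1, 1, 1, 2, 2, 2, 2, 1, 1, 1, 1])]) hk.1 hk.2
    (by decide +kernel)
  obtain rfl := List.mem_singleton.1 hp
  have hm := reads_move_right [2, 2, 2, 2, 1, 1, 1, 1] hk.1 hR
  exact ⟨(readsL_append (w := [1, 1, 1, 1, 2, 2, 2, 2]).1 hm.1).1, hm.2⟩

lemma Allowed.readsMid_sub (h : Allowed α) {k : ℤ} (hk : ReadsMid α k) :
    ReadsMid α (k - 8) := by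
  obtain ⟨p, hp, hL, -⟩ := h.exists_pattern (n := 26)
    (pats := [([1, 1, 1, 1, 2, 2, 2, 2, 1, 1, 1, 1, 2, 2, 2, 2], [])]) hk.1 hk.2
    (by decide +kernel)
  obtain rfl := List.mem_singleton.1 hp
  have hm := reads_move_left [1, 1, 1, 1, 2, 2, 2, 2] hL hk.2
  exact ⟨hm.1, (readsR_append (w := [2, 2, 2, 2, 1, 1, 1, 1]).1 hm.2).1⟩

lemma Allowed.eq_seqMid (h : Allowed α) {k : ℤ} (hk : ReadsMid α k) :
    α = fun n => seqMid (n + -k) := by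
  have hall (m : ℤ) : ReadsMid α (k + 8 * m) := by
    induction m using Int.induction_on with
    | zero => simpa using hk
    | succ m ih =>
      rw [mul_add, mul_one, ← add_assoc]
      exact h.readsMid_add ih
    | pred m ih =>
      rw [mul_sub, mul_one, ← add_sub_assoc]
      exact h.readsMid_sub ih
  funext n
  have hr := readsR_getD (hall ((n - k) / 8)).2 (i := ((n - k) % 8).toNat) (by simp; omega)
  rw [seqMid, ← sub_eq_add_neg, ← hr]
  congr 1
  omega

lemma Allowed.markovValue_of_readsMid (h : Allowed α) {k : ℤ} (hk : ReadsMid α k) :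
    markovValue α = √229 / 5 := by
  have hpos := pos_of_binary seqMid_binary
  have h0 : lambdaVal α k = √229 / 5 := by
    rw [h.eq_seqMid hk, lambdaVal_shift hpos, add_neg_cancel, lambdaVal_seqMid_zero]
  rw [← h0]
  refine markovValue_eq fun j => ?_
  rw [h0, h.eq_seqMid hk, lambdaVal_shift hpos]
  exact lambdaVal_seqMid_le _

lemma Allowed.markovValue_eq (h : Allowed α) {k : ℤ}
    (hk : 28 * √213378 / 4287 < lambdaVal α k) : markovValue α = √229 / 5 := by
  have hs : (461.92849 : ℝ) < √213378 := Real.lt_sqrt_of_sq_lt (by norm_num)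
  have hsearch : search hiApprox (301702, 100000)
      [([1, 1, 1, 2, 2, 1], [2, 2, 1, 1]), ([2, 1, 1], [2, 1, 1, 1, 2, 2, 1]),
      ([1, 1, 1, 1, 2, 2, 2, 2], [2, 2, 2, 2, 1, 1, 1, 1]),
      ([2, 2, 2, 1, 1, 1, 1, 2, 2, 2, 2], [2, 1, 1, 1, 1]),
      ([1, 1, 1, 1, 2, 2, 2, 2, 1, 1, 2, 2, 1, 1, 1, 2, 2, 1, 1],
        [2, 2, 2, 2, 1, 1, 2, 2, 1, 1, 1, 2, 2, 1, 1]),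
      ([2, 2, 2, 1, 1, 2, 2, 1, 1, 1, 2, 2, 1, 1],
        [2, 1, 1, 1, 1, 2, 2, 2, 2, 1, 1, 2, 2, 1, 1, 1, 2, 2, 1, 1])] 42 true [] [] = true := by
    decide +kernel
  obtain ⟨p, hp, hL, hR⟩ := exists_pattern_of_search h.1 (by norm_num [hiApprox]) (by norm_num)
    h.lt_hiApprox (k := k) (lt_trans (by norm_num; linarith) hk) (L := []) (R := [])
    trivial trivial hsearch
  simp only [List.mem_cons, List.not_mem_nil, or_false] at hp
  rcases hp with rfl | rfl | rfl | rfl | rfl | rfl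
  · exact absurd (h.lambdaVal_le_of_reads hL hR) hk.not_ge
  · have hm := reads_move_right [2] hL hR
    rw [show k + (([2] : List ℕ).length : ℤ) = 1 - -k by simp; ring] at hm
    have := h.neg.lambdaVal_le_of_reads (readsL_neg.2 hm.2) (readsR_neg.2 hm.1)
    rw [lambdaVal_neg (pos_of_binary h.1), neg_neg] at this
    exact absurd this hk.not_ge
  · exact h.markovValue_of_readsMid ⟨hL, hR⟩
  · have hm := reads_move_left [2, 2, 2] hL hR
    exact h.markovValue_of_readsMid ⟨hm.1, hm.2⟩
  · exact (h.not_reads_long hL hR).elim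
  · have hm := reads_move_right [2, 1, 1, 1, 1] hL hR
    exact (h.not_reads_long hm.1 hm.2).elim

lemma allowed_of_lambdaVal_lt (hα : ∀ n, 0 < α n)
    (h : ∀ k, lambdaVal α k < (2497149255 + 2842763 * √213378) / 1258910718) : Allowed α := by
  have hlt (k : ℤ) : lambdaVal α k < 3.1 := by
    linarith [h k, sqrt_lt]
  have hle (k : ℤ) : α k ≤ 3 := by
    have h1 := one_le_fwd hα (k + 1)
    have h2 := one_le_bwd hα k
    have h3 := hlt k
    rw [lambdaVal_eq' hα] at h3
    have : 0 < 1 / fwd α (k + 1) := by positivity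
    have : 0 < 1 / bwd α k := by positivity
    have : (α k : ℝ) < 4 := by linarith
    have : α k < 4 := by exact_mod_cast this
    omega
  have hinv {x : ℝ} (h1 : 1 ≤ x) (h4 : x ≤ 4) : 1 / 4 ≤ 1 / x := by gcongr
  have hadd {a : ℕ} {x : ℝ} (ha : a ≤ 3) (hx : 1 ≤ x) : a + 1 / x ≤ 4 := by
    have : 1 / x ≤ 1 := by rwa [div_le_one (by linarith)]
    have : (a : ℝ) ≤ 3 := by exact_mod_cast ha
    linarith
  refine ⟨fun k => ?_, h⟩
  have h0 := hα k
  have h3 : α k ≠ 3 := by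
    intro h3
    have hf := hinv (one_le_fwd hα (k + 1))
      (by rw [fwd_eq hα]; exact hadd (hle _) (one_le_fwd hα _))
    have hb := hinv (one_le_bwd hα k)
      (by rw [bwd_eq hα]; exact hadd (hle _) (one_le_bwd hα _))
    have := hlt k
    rw [lambdaVal_eq' hα, h3] at this
    push_cast at this
    linarith
  have := hle k
  omega

end Patterns

end MarkovGap

/-- The intersection of the Markov spectrum with the open interval consists of
exactly one (hence isolated) point, and both endpoints belong to the Markov
spectrum. -/
theorem markov_gap_10 :
    markovSpectrum ∩ Ioo (28 * Real.sqrt 213378 / 4287) ((2497149255 + 2842763 * Real.sqrt 213378) / 1258910718) = {(Real.sqrt 229 / 5 : ℝ)} ∧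
    (28 * Real.sqrt 213378 / 4287) ∈ markovSpectrum ∧ ((2497149255 + 2842763 * Real.sqrt 213378) / 1258910718) ∈ markovSpectrum := by
  have hs1 : (461.9285 : ℝ) < √213378 := Real.lt_sqrt_of_sq_lt (by norm_num)
  have hs2 := MarkovGap.sqrt_lt
  have ht1 : (15.13 : ℝ) < √229 := Real.lt_sqrt_of_sq_lt (by norm_num)
  have ht2 : √229 < 15.133 := by
    rw [Real.sqrt_lt' (by norm_num)]
    norm_num
  refine ⟨Set.ext fun x => ⟨?_, ?_⟩, ?_, ?_⟩
  · rintro ⟨⟨α, hα, hbdd, rfl⟩, hlo, hhi⟩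
    obtain ⟨k, hk⟩ := exists_lt_of_lt_ciSup hlo
    exact (MarkovGap.allowed_of_lambdaVal_lt hα
      fun j => (le_ciSup hbdd j).trans_lt hhi).markovValue_eq hk
  · rintro rfl
    refine ⟨?_, by linarith, by linarith⟩
    rw [← MarkovGap.lambdaVal_seqMid_zero]
    refine MarkovGap.lambdaVal_mem_markovSpectrum
      (MarkovGap.pos_of_binary MarkovGap.seqMid_binary) fun j => ?_
    rw [MarkovGap.lambdaVal_seqMid_zero]
    exact MarkovGap.lambdaVal_seqMid_le j
  · rw [← MarkovGap.lambdaVal_seqLo_twelve]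
    refine MarkovGap.lambdaVal_mem_markovSpectrum
      (MarkovGap.pos_of_binary MarkovGap.seqLo_binary) fun j => ?_
    rw [MarkovGap.lambdaVal_seqLo_twelve]
    exact MarkovGap.lambdaVal_seqLo_le j
  · rw [← MarkovGap.lambdaVal_seqHi_two]
    refine MarkovGap.lambdaVal_mem_markovSpectrum
      (MarkovGap.pos_of_binary MarkovGap.seqHi_binary) fun j => ?_
    rw [MarkovGap.lambdaVal_seqHi_two]
    exact MarkovGap.lambdaVal_seqHi_le j
end
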